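/- arXiv:2112.00258 — 11 statements merged into one kernel-verified Lean document; each statement's English description precedes it below -/
import Mathlib

section
/- Let E and F be measurable spaces, b ≥ 1, and let W : Ω → F and X = (X_0, …, X_b) : Ω → E^{b+1} be random elements on a probability space (Ω, P). Suppose that for every permutation σ of the index set {0, 1, …, b}, the pair (W, (X_{σ(0)}, …, X_{σ(b)})) has the same joint distribution as (W, (X_0, …, X_b)). Let T : F × E^{b+1} → ℝ^{b+1} be measurable and X-symmetric in its second argument, i.e., T(w, x ∘ σ) = T(w, x) ∘ σ for every permutation σ of {0, 1, …, b}. Then the random vector (T_0(W, X), …, T_b(W, X)) is exchangeable; in particular all of its coordinates have the same distribution. -/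
open MeasureTheory

section Exchangeability

open ProbabilityTheory

variable {Ω ι E F G : Type*} [MeasurableSpace Ω] [MeasurableSpace E] [MeasurableSpace F]
  [MeasurableSpace G] {P : Measure Ω}

/-- A random vector `Y` is exchangeable if permuting its coordinates does not change its law.
Measurability of `Y` is part of `IdentDistrib`, hence of this notion. -/
def Exchangeable (Y : Ω → ι → E) (P : Measure Ω) : Prop :=
  ∀ σ : Equiv.Perm ι, IdentDistrib (fun ω i => Y ω (σ i)) Y P P

/-- A random vector `X` is exchangeable jointly with a random element `W` if permuting the
coordinates of `X`, while `W` is kept fixed, does not change the law of the pair `(W, X)`. This is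
what the conditional-independence null hypothesis provides for the covariate and its
pseudo-covariates. -/
def ExchangeableWith (W : Ω → F) (X : Ω → ι → E) (P : Measure Ω) : Prop :=
  ∀ σ : Equiv.Perm ι,
    IdentDistrib (fun ω => (W ω, fun i => X ω (σ i))) (fun ω => (W ω, X ω)) P P

/-- A vector of statistics is `X`-symmetric if permuting the entries of its second argument
permutes its values in the same way. -/
def XSymmetric (T : F × (ι → E) → ι → G) : Prop :=
  ∀ (w : F) (x : ι → E) (σ : Equiv.Perm ι),
    T (w, fun i => x (σ i)) = fun i => T (w, x) (σ i)

theorem ExchangeableWith.of_map_eq {W : Ω → F} {X : Ω → ι → E}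
    (hW : AEMeasurable W P) (hX : AEMeasurable X P)
    (h : ∀ σ : Equiv.Perm ι,
      P.map (fun ω => (W ω, fun i => X ω (σ i))) = P.map (fun ω => (W ω, X ω))) :
    ExchangeableWith W X P := by
  intro σ
  have reindex_measurable : Measurable fun (x : ι → E) i => x (σ i) := by fun_prop
  exact ⟨hW.prodMk (reindex_measurable.comp_aemeasurable hX), hW.prodMk hX, h σ⟩

theorem ExchangeableWith.exchangeable_comp {W : Ω → F} {X : Ω → ι → E}
    {T : F × (ι → E) → ι → G} (h : ExchangeableWith W X P) (hT : Measurable T)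
    (hsym : XSymmetric T) : Exchangeable (fun ω => T (W ω, X ω)) P := by
  intro σ
  have statistic_identDistrib :
      IdentDistrib (fun ω => T (W ω, fun i => X ω (σ i))) (fun ω => T (W ω, X ω)) P P :=
    (h σ).comp hT
  simpa only [hsym _ _ σ] using statistic_identDistrib

theorem Exchangeable.identDistrib_eval {Y : Ω → ι → E} (h : Exchangeable Y P) (i j : ι) :
    IdentDistrib (fun ω => Y ω i) (fun ω => Y ω j) P P := by
  classical
  simpa only [Function.comp_def, Equiv.swap_apply_right] using
    (h (Equiv.swap i j)).comp (measurable_pi_apply j)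

theorem crrt_stmt_0_general {W : Ω → F} {X : Ω → ι → E} {T : F × (ι → E) → ι → G}
    (hexch : ExchangeableWith W X P) (hT : Measurable T) (hsym : XSymmetric T) :
    Exchangeable (fun ω => T (W ω, X ω)) P ∧
      ∀ i j, IdentDistrib (fun ω => T (W ω, X ω) i) (fun ω => T (W ω, X ω) j) P P :=
  have statistic_exchangeable := hexch.exchangeable_comp hT hsym
  ⟨statistic_exchangeable, statistic_exchangeable.identDistrib_eval⟩

end Exchangeability

/-- **Proposition 1 (exchangeability of X-symmetric statistics).**
If for every permutation `σ` of the index set `{0, …, b}` the pair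
`(W, (X_{σ 0}, …, X_{σ b}))` has the same joint law as `(W, (X_0, …, X_b))`,
and `T` is `X`-symmetric in its second argument, then the random vector
`(T_0(W,X), …, T_b(W,X))` is exchangeable; in particular all of its
coordinates have the same distribution. -/
theorem crrt_stmt_0 {Ω E F : Type*} [MeasurableSpace Ω] [MeasurableSpace E]
    [MeasurableSpace F]
    (P : Measure Ω) [IsProbabilityMeasure P] (b : ℕ) (hb : 1 ≤ b)
    (W : Ω → F) (X : Ω → Fin (b + 1) → E)
    (hW : Measurable W) (hX : Measurable X)
    (hexch : ∀ σ : Equiv.Perm (Fin (b + 1)),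
      P.map (fun ω => (W ω, fun i => X ω (σ i))) = P.map (fun ω => (W ω, X ω)))
    (T : F × (Fin (b + 1) → E) → Fin (b + 1) → ℝ) (hT : Measurable T)
    (hsym : ∀ (w : F) (x : Fin (b + 1) → E) (σ : Equiv.Perm (Fin (b + 1))),
      T (w, fun i => x (σ i)) = fun i => T (w, x) (σ i)) :
    (∀ σ : Equiv.Perm (Fin (b + 1)),
      P.map (fun ω => fun i => T (W ω, X ω) (σ i)) = P.map (fun ω => T (W ω, X ω))) ∧
    (∀ i j : Fin (b + 1),
      P.map (fun ω => T (W ω, X ω) i) = P.map (fun ω => T (W ω, X ω) j)) := by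
  have ⟨hexchT, hident⟩ :=
    crrt_stmt_0_general (.of_map_eq hW.aemeasurable hX.aemeasurable hexch) hT hsym
  exact ⟨fun σ => (hexchT σ).map_eq, fun i j => (hident i j).map_eq⟩
end

section
/- Let n ≥ 1, let t : {0, 1, …, n−1} → ℝ be any function, and let α ∈ [0, 1]. Then the number of indices s ∈ {0, 1, …, n−1} such that #{k ∈ {0, 1, …, n−1} : t(s) ≤ t(k)} ≤ α·n is at most α·n. -/
section

open Finset

variable {ι β : Type*} [LinearOrder β]

theorem exists_mem_card_le_card_filter_le {s u : Finset ι} (hu : u.Nonempty) (hus : u ⊆ s)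
    (f : ι → β) : ∃ m ∈ u, #u ≤ #{k ∈ s | f m ≤ f k} := by
  obtain ⟨m, hm, hmin⟩ := exists_min_image u f hu
  exact ⟨m, hm, card_le_card fun k hk => mem_filter.2 ⟨hus hk, hmin k hk⟩⟩

theorem crrt_stmt_2_general {R : Type*} [AddMonoidWithOne R] [PartialOrder R] [AddLeftMono R]
    [ZeroLEOneClass R] [DecidableLE R] (s : Finset ι) (f : ι → β) {c : R} (hc : 0 ≤ c) :
    (#{i ∈ s | (#{k ∈ s | f i ≤ f k} : R) ≤ c} : R) ≤ c := by
  set u := {i ∈ s | (#{k ∈ s | f i ≤ f k} : R) ≤ c}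
  obtain hu | hu := u.eq_empty_or_nonempty
  · simpa [hu] using hc
  · obtain ⟨m, hm, hcard⟩ := exists_mem_card_le_card_filter_le hu (filter_subset _ s) f
    calc (#u : R) ≤ #{k ∈ s | f m ≤ f k} := Nat.mono_cast hcard
      _ ≤ c := (mem_filter.1 hm).2

end

/-- **Deterministic counting lemma behind rank p-value validity.**
For any `t : Fin n → ℝ` and `α ∈ [0,1]`, the number of indices `s` whose
"rank count" `#{k : t s ≤ t k}` is at most `α·n` is itself at most `α·n`. -/
theorem crrt_stmt_2 (n : ℕ) (hn : 1 ≤ n) (t : Fin n → ℝ) (α : ℝ)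
    (hα : α ∈ Set.Icc (0 : ℝ) 1) :
    ((Finset.univ.filter fun s : Fin n =>
        ((Finset.univ.filter fun k : Fin n => t s ≤ t k).card : ℝ) ≤ α * n).card : ℝ)
      ≤ α * n :=
  crrt_stmt_2_general Finset.univ t (mul_nonneg hα.1 n.cast_nonneg)
end

section
/- Let b ≥ 1, let t : {0, 1, …, b} → ℝ be a fixed function, and let σ be a uniformly distributed random permutation of {0, 1, …, b}. Define the random p-value p = (1/(b+1)) · #{k ∈ {0, 1, …, b} : t(σ(0)) ≤ t(σ(k))}. Then for every α ∈ [0, 1], P(p ≤ α) ≤ α. -/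
/-!
Averaging over the starting point shows that under a transitive group action the point `g • i`, for
uniform `g`, is uniformly distributed. The p-value of the relabelled statistics `t (g • ·)` at `i`
is the p-value of `t` at `g • i`, so it suffices to bound the fraction of indices whose p-value is
at most `α`. Among these pick one with the least statistic: all of them are counted in its rank,
which is at most `α` times the number of indices.
-/

open Finset

section TransitiveAction

variable {G ι : Type*} [Group G] [Fintype G] [MulAction G ι] [MulAction.IsPretransitive G ι]
  (p : ι → Prop) [DecidablePred p]

theorem card_filter_smul_eq_card_filter_smul (i j : ι) :
    #{g : G | p (g • i)} = #{g : G | p (g • j)} := by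
  obtain ⟨h, rfl⟩ := MulAction.exists_smul_eq G j i
  exact card_equiv (Equiv.mulRight h) (by simp [mul_smul])

theorem card_filter_smul_mul_card [Fintype ι] (i : ι) :
    #{g : G | p (g • i)} * Fintype.card ι = #{j | p j} * Fintype.card G :=
  calc #{g : G | p (g • i)} * Fintype.card ι
    _ = ∑ j, #{g : G | p (g • j)} := by
      simp [card_filter_smul_eq_card_filter_smul p _ i, mul_comm]
    _ = ∑ g : G, #{j | p (g • j)} :=
      sum_card_bipartiteAbove_eq_sum_card_bipartiteBelow fun j (g : G) => p (g • j)
    _ = ∑ _g : G, #{j | p j} :=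
      sum_congr rfl fun g _ => card_equiv (MulAction.toPerm g) (by simp)
    _ = #{j | p j} * Fintype.card G := by simp [mul_comm]

theorem dens_filter_smul [Fintype ι] (i : ι) :
    dens {g : G | p (g • i)} = dens {j | p j} := by
  have : Nonempty ι := ⟨i⟩
  rw [dens, dens, div_eq_div_iff (by simp) (by simp)]
  exact_mod_cast card_filter_smul_mul_card (G := G) p i

end TransitiveAction

section RankPValue

variable {ι κ β : Type*} [Fintype ι] [Fintype κ]

/-- The rank-based p-value of the observation `i` among the statistics `t`: the proportion of
indices whose statistic is at least `t i`. Ties, and `i` itself, are counted. -/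
def rankPValue [LE β] [DecidableLE β] (t : ι → β) (i : ι) : ℚ≥0 :=
  dens {k | t i ≤ t k}

theorem rankPValue_comp_equiv [LE β] [DecidableLE β] (t : κ → β) (e : ι ≃ κ) (i : ι) :
    rankPValue (t ∘ e) i = rankPValue t (e i) := by
  have hcard : #{k | t (e i) ≤ t (e k)} = #{k | t (e i) ≤ t k} := card_equiv e (by simp)
  simp only [rankPValue, dens, Function.comp_apply, hcard, Fintype.card_congr e]

theorem dens_filter_rankPValue_le [LinearOrder β] (t : ι → β) {α : ℝ} (hα : 0 ≤ α) :
    (dens {i | (rankPValue t i : ℝ) ≤ α} : ℝ) ≤ α := by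
  set S : Finset ι := {i | (rankPValue t i : ℝ) ≤ α} with hS
  obtain hempty | hne := S.eq_empty_or_nonempty
  · simpa [hempty] using hα
  obtain ⟨m, hm, hmin⟩ := S.exists_min_image t hne
  have hsub : S ⊆ ({k | t m ≤ t k} : Finset ι) := fun k hk => by simpa using hmin k hk
  calc (S.dens : ℝ)
    _ ≤ rankPValue t m := by exact_mod_cast dens_le_dens hsub
    _ ≤ α := by simpa [hS] using hm

end RankPValue

theorem crrt_stmt_3_general {G ι β : Type*} [Group G] [Fintype G] [Fintype ι] [MulAction G ι]
    [MulAction.IsPretransitive G ι] [LinearOrder β] (t : ι → β) (i : ι) {α : ℝ} (hα : 0 ≤ α) :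
    (dens {g : G | (rankPValue (fun k => t (g • k)) i : ℝ) ≤ α} : ℝ) ≤ α := by
  have hrelabel (g : G) : rankPValue (fun k => t (g • k)) i = rankPValue t (g • i) :=
    rankPValue_comp_equiv t (MulAction.toPerm g) i
  simp only [hrelabel]
  rw [dens_filter_smul (fun j => (rankPValue t j : ℝ) ≤ α)]
  exact dens_filter_rankPValue_le t hα

/-- **Validity of the rank p-value under a uniform random permutation.**
Let `t : Fin (b+1) → ℝ` be fixed and let `σ` be a uniformly distributed random
permutation of `{0, …, b}`.  With `p σ = #{k : t (σ 0) ≤ t (σ k)} / (b+1)`, we have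
`P(p ≤ α) ≤ α` for every `α ∈ [0,1]`; here the probability is the fraction of
permutations realizing the event. -/
theorem crrt_stmt_3 (b : ℕ) (hb : 1 ≤ b) (t : Fin (b + 1) → ℝ) (α : ℝ)
    (hα : α ∈ Set.Icc (0 : ℝ) 1) :
    ((Finset.univ.filter fun σ : Equiv.Perm (Fin (b + 1)) =>
          ((Finset.univ.filter fun k : Fin (b + 1) => t (σ 0) ≤ t (σ k)).card : ℝ)
              / (b + 1) ≤ α).card : ℝ)
        / (Fintype.card (Equiv.Perm (Fin (b + 1))) : ℝ) ≤ α := by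
  simpa [rankPValue, nnratCast_dens] using
    crrt_stmt_3_general (G := Equiv.Perm (Fin (b + 1))) t 0 hα.1
end

section
/- Let b ≥ 1, let w : {0, 1, …, b} → [0, ∞) be nonnegative weights, let s ∈ {0, 1, …, b}, and let ε_1, …, ε_b ∈ ℝ. For k ∈ {1, …, b} let d^s_(k) denote the k-th smallest value of the multiset {w_r : r ∈ {0, …, b}, r ≠ s}. Suppose that for every k ∈ {1, …, b}, w_s ≤ e^{ε_k} · d^s_(b+1−k) (i.e., w_s is at most e^{ε_k} times the k-th largest of the other weights). Then w_s · (1 + e^{−ε_1} + … + e^{−ε_b}) ≤ w_0 + w_1 + … + w_b. -/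
open Finset

theorem sum_getD_reflect {M : Type*} [AddCommMonoid M] (l : List M) (d : M) :
    ∑ k : Fin l.length, l.getD (l.length - 1 - k) d = l.sum :=
  calc
    ∑ k : Fin l.length, l.getD (l.length - 1 - k) d
      = ∑ i ∈ range l.length, l.getD (l.length - 1 - i) d :=
        Fin.sum_univ_eq_sum_range (fun i => l.getD (l.length - 1 - i) d) l.length
    _ = ∑ i ∈ range l.length, l.getD i d := sum_range_reflect (fun i => l.getD i d) l.length
    _ = ∑ i : Fin l.length, l.getD i d := (Fin.sum_univ_eq_sum_range (l.getD · d) l.length).symm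
    _ = ∑ i : Fin l.length, l[i] := by simp only [Fin.is_lt, List.getD_eq_getElem, Fin.getElem_fin]
    _ = l.sum := Fin.sum_univ_getElem l

theorem sum_getD_sort_reflect {M : Type*} [AddCommMonoid M] [LinearOrder M] {m : Multiset M}
    {n : ℕ} (hm : m.card = n) (d : M) :
    ∑ k : Fin n, (m.sort (· ≤ ·)).getD (n - 1 - k) d = m.sum := by
  obtain rfl : (m.sort (· ≤ ·)).length = n := (Multiset.length_sort _).trans hm
  rw [sum_getD_reflect, ← Multiset.sum_coe, Multiset.sort_eq]

section WeightInequality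

variable {ι : Type*} [DecidableEq ι] {t : Finset ι} {s : ι} {b : ℕ}

theorem mul_one_add_sum_le_sum_of_mul_le_getD_sort {R : Type*} [Semiring R] [LinearOrder R]
    [IsOrderedAddMonoid R] (hs : s ∈ t) (ht : #t = b + 1) (w : ι → R) (c : Fin b → R) (d : R)
    (h : ∀ k : Fin b, w s * c k ≤ (((t.erase s).val.map w).sort (· ≤ ·)).getD (b - 1 - k) d) :
    w s * (1 + ∑ k, c k) ≤ ∑ r ∈ t, w r := by
  have hcard : ((t.erase s).val.map w).card = b := by
    rw [Multiset.card_map, card_val, card_erase_of_mem hs, ht, Nat.add_sub_cancel]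
  calc
    w s * (1 + ∑ k, c k) = w s + ∑ k, w s * c k := by rw [mul_add, mul_one, mul_sum]
    _ ≤ w s + ∑ k : Fin b, (((t.erase s).val.map w).sort (· ≤ ·)).getD (b - 1 - k) d := by
      gcongr with k
      exact h k
    _ = w s + ∑ r ∈ t.erase s, w r := by rw [sum_getD_sort_reflect hcard, sum_map_val]
    _ = ∑ r ∈ t, w r := add_sum_erase t w hs

theorem crrt_stmt_8_general (hs : s ∈ t) (ht : #t = b + 1) (w : ι → ℝ) (ε : Fin b → ℝ)
    (h : ∀ k : Fin b,
      w s ≤ Real.exp (ε k) * (((t.erase s).val.map w).sort (· ≤ ·)).getD (b - 1 - k) 0) :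
    w s * (1 + ∑ k, Real.exp (-ε k)) ≤ ∑ r ∈ t, w r := by
  refine mul_one_add_sum_le_sum_of_mul_le_getD_sort hs ht w (fun k => Real.exp (-ε k)) 0 fun k => ?_
  rw [Real.exp_neg, ← div_eq_mul_inv, div_le_iff₀' (Real.exp_pos _)]
  exact h k

end WeightInequality

/-- **Deterministic weight inequality (upper-bound direction, Theorem 3 core).**
Let `w : Fin (b+1) → [0,∞)` and `s` an index.  Writing `d^s_(1) ≤ … ≤ d^s_(b)` for the
sorted values of `{w r : r ≠ s}`, if for every `k ∈ {1, …, b}` we have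
`w s ≤ e^{ε_k} · d^s_(b+1−k)` (the `k`-th largest of the other weights), then
`w s · (1 + Σ_k e^{−ε_k}) ≤ Σ_r w r`.  Here `ε k` (for `k : Fin b`) stands for
`ε_{k+1}`, and `d^s_(b+1−(k+1)) = d^s_(b−k)` is the entry of the ascending sort at
0-based position `b − 1 − k`. -/
theorem crrt_stmt_8 (b : ℕ) (hb : 1 ≤ b) (w : Fin (b + 1) → ℝ) (hw : ∀ r, 0 ≤ w r)
    (s : Fin (b + 1)) (ε : Fin b → ℝ)
    (h : ∀ k : Fin b,
      w s ≤ Real.exp (ε k) *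
        ((((Finset.univ.erase s).val.map w).sort (· ≤ ·)).getD (b - 1 - k.val) 0)) :
    w s * (1 + ∑ k : Fin b, Real.exp (-ε k)) ≤ ∑ r, w r :=
  crrt_stmt_8_general (mem_univ s) (card_fin (b + 1)) w ε h
end

section
/- Let b ≥ 1 and α ∈ [0, 1] with λ = ⌊(b+1)α⌋, and let ε_1, …, ε_b ∈ ℝ. On a probability space let W = (W_0, …, W_b) be a random vector of strictly positive weights, and let S be a random index in {0, 1, …, b} whose conditional distribution given W satisfies P(S = s | W) = W_s / (W_0 + … + W_b). For an index s and k ∈ {1, …, b}, let d^s_(k)(W) denote the k-th smallest value of the multiset {W_r : r ≠ s}. Let R ⊆ {0, 1, …, b} be any (possibly W-measurably chosen) set of indices with |R| ≤ λ. Then P( S ∈ R and for all k ∈ {1, …, b}: W_S ≤ e^{ε_k} · d^S_(b+1−k)(W) ) ≤ λ / (1 + e^{−ε_1} + … + e^{−ε_b}). -/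
open MeasureTheory

/-!
Given the information `m`, the event `S = i` is only counted when `i` belongs to a random set of
at most `L` indices and has conditional probability at most `c`, so the total is at most `L * c`.
The rank constraints supply `c`: dividing the `k`-th one by `exp (ε k)` and summing over `k` bounds
`W_S * ∑ k, exp (-ε k)` by the sum of the other weights, that is,
`W_S / ∑ r, W_r ≤ 1 / (1 + ∑ k, exp (-ε k))`.
-/

lemma sum_getD_rev_eq_sum {α : Type*} [AddCommMonoid α] {n : ℕ} (l : List α) (d : α)
    (hl : l.length = n) : ∑ k : Fin n, l.getD (n - 1 - k) d = l.sum := by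
  subst hl
  rw [← Equiv.sum_comp Fin.revPerm, ← Fin.sum_univ_getElem l]
  refine Finset.sum_congr rfl fun k _ => ?_
  have hrev : l.length - 1 - (Fin.revPerm k).val = k.val := by
    simp only [Fin.revPerm_apply, Fin.val_rev]
    omega
  rw [hrev, List.getD_eq_getElem _ _ k.isLt]

lemma mul_sum_exp_neg_le_sum_of_le_sort {n : ℕ} {ε : Fin n → ℝ} {x : ℝ} {M : Multiset ℝ}
    (hM : M.card = n)
    (hx : ∀ k : Fin n, x ≤ Real.exp (ε k) * (M.sort (· ≤ ·)).getD (n - 1 - k) 0) :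
    x * ∑ k, Real.exp (-ε k) ≤ M.sum := by
  have hterm (k : Fin n) : x * Real.exp (-ε k) ≤ (M.sort (· ≤ ·)).getD (n - 1 - k) 0 := by
    rw [Real.exp_neg, ← div_eq_mul_inv, div_le_iff₀' (Real.exp_pos _)]
    exact hx k
  calc x * ∑ k, Real.exp (-ε k)
      = ∑ k, x * Real.exp (-ε k) := Finset.mul_sum ..
    _ ≤ ∑ k : Fin n, (M.sort (· ≤ ·)).getD (n - 1 - k) 0 := Finset.sum_le_sum fun k _ => hterm k
    _ = (M.sort (· ≤ ·)).sum := sum_getD_rev_eq_sum _ _ (by rw [Multiset.length_sort, hM])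
    _ = M.sum := by rw [← Multiset.sum_coe, Multiset.sort_eq]

lemma div_sum_le_of_le_sort_erase {ι : Type*} [Fintype ι] [DecidableEq ι] {n : ℕ}
    (hι : Fintype.card ι = n + 1) {ε : Fin n → ℝ} {w : ι → ℝ} (hw : ∀ i, 0 ≤ w i) {s : ι}
    (hs : ∀ k : Fin n, w s ≤ Real.exp (ε k) *
      (((Finset.univ.erase s).val.map w).sort (· ≤ ·)).getD (n - 1 - k) 0) :
    w s / ∑ i, w i ≤ 1 / (1 + ∑ k, Real.exp (-ε k)) := by
  have hcard : ((Finset.univ.erase s).val.map w).card = n := by simp [hι]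
  have hothers : w s * ∑ k, Real.exp (-ε k) ≤ ∑ i ∈ Finset.univ.erase s, w i :=
    mul_sum_exp_neg_le_sum_of_le_sort hcard hs
  have htotal : w s * (1 + ∑ k, Real.exp (-ε k)) ≤ ∑ i, w i := by
    rw [← Finset.add_sum_erase _ _ (Finset.mem_univ s), mul_add, mul_one]
    gcongr
  refine div_le_of_le_mul₀ (Finset.sum_nonneg fun i _ => hw i) (by positivity) ?_
  rwa [one_div_mul_eq_div, le_div_iff₀ (by positivity)]

section ConditionalProbability

open scoped ProbabilityTheory

variable {Ω ι : Type*} {m mΩ : MeasurableSpace Ω} {μ : Measure Ω} [IsFiniteMeasure μ]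

lemma setIntegral_condProb (hm : m ≤ mΩ) {A B : Set Ω} (hA : MeasurableSet A)
    (hB : MeasurableSet[m] B) : ∫ ω in B, (μ⟦A | m⟧) ω ∂μ = μ.real (A ∩ B) := by
  rw [setIntegral_condExp hm ((integrable_const _).indicator hA) hB, integral_indicator_const _ hA,
    measureReal_restrict_apply hA, smul_eq_mul, mul_one]

variable {S : Ω → ι}

lemma measureReal_mem_finset_eq_integral_sum_condProb [Finite ι] (hm : m ≤ mΩ)
    (hS : ∀ i, MeasurableSet {ω | S ω = i}) {T : Ω → Finset ι}
    (hT : ∀ i, MeasurableSet[m] {ω | i ∈ T ω}) :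
    μ.real {ω | S ω ∈ T ω} = ∫ ω, ∑ i ∈ T ω, (μ⟦{ω | S ω = i} | m⟧) ω ∂μ := by
  classical
  have := Fintype.ofFinite ι
  have hunion : {ω | S ω ∈ T ω} = ⋃ i, {ω | S ω = i} ∩ {ω | i ∈ T ω} := by
    ext ω
    simp
  have hdisj : Pairwise (Function.onFun Disjoint fun i => {ω | S ω = i} ∩ {ω | i ∈ T ω}) :=
    fun i j hij => Set.disjoint_left.2 fun ω hi hj => hij (hi.1.symm.trans hj.1)
  have hsum (ω : Ω) : ∑ i ∈ T ω, (μ⟦{ω | S ω = i} | m⟧) ω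
      = ∑ i, {ω | i ∈ T ω}.indicator (μ⟦{ω | S ω = i} | m⟧) ω := by
    simp [Set.indicator_apply]
  simp only [hsum]
  rw [hunion, measureReal_iUnion_fintype hdisj fun i => (hS i).inter (hm _ (hT i)),
    integral_finsetSum _ fun i _ => integrable_condExp.indicator (hm _ (hT i))]
  refine Finset.sum_congr rfl fun i _ => ?_
  rw [integral_indicator (hm _ (hT i)), setIntegral_condProb hm (hS i) (hT i)]

lemma measureReal_mem_and_condProb_le [Finite ι] (hm : m ≤ mΩ)
    (hS : ∀ i, MeasurableSet {ω | S ω = i}) {R : Ω → Finset ι}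
    (hR : ∀ i, MeasurableSet[m] {ω | i ∈ R ω}) {L : ℕ} (hcard : ∀ ω, (R ω).card ≤ L)
    {c : ℝ} (hc : 0 ≤ c) :
    μ.real {ω | S ω ∈ R ω ∧ (μ⟦{ω' | S ω' = S ω} | m⟧) ω ≤ c} ≤ μ.real Set.univ * (L * c) := by
  classical
  let T (ω : Ω) : Finset ι := {i ∈ R ω | (μ⟦{ω' | S ω' = i} | m⟧) ω ≤ c}
  have hT (i : ι) : MeasurableSet[m] {ω | i ∈ T ω} := by
    have hcondProb : Measurable[m] (μ⟦{ω' | S ω' = i} | m⟧) :=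
      stronglyMeasurable_condExp.measurable
    simp only [T, Finset.mem_filter]
    exact (hR i).inter (hcondProb measurableSet_Iic)
  have hnonneg : ∀ᵐ ω ∂μ, ∀ i, 0 ≤ (μ⟦{ω' | S ω' = i} | m⟧) ω :=
    ae_all_iff.2 fun i => condExp_nonneg <| .of_forall fun ω =>
      Set.indicator_nonneg (fun _ _ => zero_le_one) ω
  have hbound (ω : Ω) : ∑ i ∈ T ω, (μ⟦{ω' | S ω' = i} | m⟧) ω ≤ L * c :=
    calc ∑ i ∈ T ω, (μ⟦{ω' | S ω' = i} | m⟧) ω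
        ≤ (T ω).card • c := Finset.sum_le_card_nsmul _ _ _ fun i hi => (Finset.mem_filter.1 hi).2
      _ = (T ω).card * c := nsmul_eq_mul _ _
      _ ≤ L * c := by
        gcongr
        exact (Finset.card_filter_le _ _).trans (hcard ω)
  calc μ.real {ω | S ω ∈ R ω ∧ (μ⟦{ω' | S ω' = S ω} | m⟧) ω ≤ c}
      = μ.real {ω | S ω ∈ T ω} := by simp only [T, Finset.mem_filter]
    _ = ∫ ω, ∑ i ∈ T ω, (μ⟦{ω' | S ω' = i} | m⟧) ω ∂μ :=
        measureReal_mem_finset_eq_integral_sum_condProb hm hS hT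
    _ ≤ ∫ _, L * c ∂μ := integral_mono_of_nonneg
        (hnonneg.mono fun ω h => Finset.sum_nonneg fun i _ => h i) (integrable_const _)
        (.of_forall hbound)
    _ = μ.real Set.univ * (L * c) := by rw [integral_const, smul_eq_mul]

/-- Summing `hcond` over `i` shows that the total weight is almost surely nonzero, so the junk
value `W ω i / 0 = 0` occurs only on a null set. -/
theorem crrt_stmt_10_general [Fintype ι] [DecidableEq ι] (hm : m ≤ mΩ)
    (P : Measure Ω) [IsProbabilityMeasure P]
    {b : ℕ} (hι : Fintype.card ι = b + 1) (ε : Fin b → ℝ)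
    {W : Ω → ι → ℝ} (hW : ∀ ω i, 0 ≤ W ω i) (hS : ∀ i, MeasurableSet {ω | S ω = i})
    (hcond : ∀ i, P⟦{ω | S ω = i} | m⟧ =ᵐ[P] fun ω => W ω i / ∑ r, W ω r)
    {R : Ω → Finset ι} (hR : ∀ i, MeasurableSet[m] {ω | i ∈ R ω})
    {L : ℕ} (hcard : ∀ ω, (R ω).card ≤ L) :
    P {ω | S ω ∈ R ω ∧ ∀ k : Fin b, W ω (S ω) ≤ Real.exp (ε k) *
        (((Finset.univ.erase (S ω)).val.map (W ω)).sort (· ≤ ·)).getD (b - 1 - k) 0}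
      ≤ ENNReal.ofReal (L / (1 + ∑ k, Real.exp (-ε k))) := by
  set c : ℝ := 1 / (1 + ∑ k, Real.exp (-ε k)) with hc
  have hsub : {ω | S ω ∈ R ω ∧ ∀ k : Fin b, W ω (S ω) ≤ Real.exp (ε k) *
        (((Finset.univ.erase (S ω)).val.map (W ω)).sort (· ≤ ·)).getD (b - 1 - k) 0}
      ≤ᵐ[P] {ω | S ω ∈ R ω ∧ (P⟦{ω' | S ω' = S ω} | m⟧) ω ≤ c} := by
    filter_upwards [ae_all_iff.2 hcond] with ω hω
    rintro ⟨hmem, hrank⟩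
    exact ⟨hmem, (hω (S ω)).trans_le (div_sum_le_of_le_sort_erase hι (hW ω) hrank)⟩
  refine (measure_mono_ae hsub).trans ?_
  rw [← ofReal_measureReal]
  refine ENNReal.ofReal_le_ofReal ?_
  simpa [hc, div_eq_mul_inv] using
    measureReal_mem_and_condProb_le (μ := P) hm hS hR hcard (c := c) (by positivity)

end ConditionalProbability

/-- **Theorem 3 core ('Type 1 Error Upper Bound 2', finite-sample form).**
Let `W = (W_0, …, W_b)` be a random vector of strictly positive weights, and let `S` be
a random index whose conditional distribution given `W` is proportional to the weights:
`P(S = s | W) = W_s / Σ_r W_r` (stated via conditional expectation given `σ(W)`).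
Let `λ = ⌊(b+1)α⌋` and let `R` be a `W`-measurably chosen set of indices of cardinality
at most `λ`.  Then the probability that `S ∈ R` and simultaneously, for every
`k ∈ {1, …, b}`, `W_S ≤ e^{ε_k} ·` (the `k`-th largest of `{W_r : r ≠ S}`), is at most
`λ / (1 + Σ_k e^{−ε_k})`.  Here `ε k` (for `k : Fin b`) stands for `ε_{k+1}`, and the
`(k+1)`-th largest of the other weights is the entry of the ascending sort at 0-based
position `b − 1 − k`. -/
theorem crrt_stmt_10 {Ω : Type*} [mΩ : MeasurableSpace Ω]
    (P : Measure Ω) [IsProbabilityMeasure P]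
    (b : ℕ) (hb : 1 ≤ b) (α : ℝ) (hα : α ∈ Set.Icc (0 : ℝ) 1) (ε : Fin b → ℝ)
    (W : Ω → Fin (b + 1) → ℝ) (hWmeas : Measurable W) (hWpos : ∀ ω i, 0 < W ω i)
    (S : Ω → Fin (b + 1)) (hS : Measurable S)
    (hcond : ∀ s : Fin (b + 1),
      P[Set.indicator {ω | S ω = s} (fun _ => (1 : ℝ))|MeasurableSpace.comap W inferInstance]
        =ᵐ[P] fun ω => W ω s / ∑ r, W ω r)
    (R : (Fin (b + 1) → ℝ) → Finset (Fin (b + 1)))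
    (hRmeas : @Measurable _ _ _ ⊤ R)
    (hRcard : ∀ x, (R x).card ≤ ⌊(b + 1 : ℝ) * α⌋₊) :
    P {ω | S ω ∈ R (W ω) ∧ ∀ k : Fin b,
        W ω (S ω) ≤ Real.exp (ε k) *
          ((((Finset.univ.erase (S ω)).val.map (W ω)).sort (· ≤ ·)).getD (b - 1 - k.val) 0)}
      ≤ ENNReal.ofReal
          ((⌊(b + 1 : ℝ) * α⌋₊ : ℝ) / (1 + ∑ k : Fin b, Real.exp (-ε k))) := by
  exact crrt_stmt_10_general hWmeas.comap_le P (Fintype.card_fin _) ε (fun ω i => (hWpos ω i).le)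
    (fun s => hS (measurableSet_singleton s)) hcond
    (fun s => ⟨{x | s ∈ R x}, @hRmeas {F | s ∈ F} trivial, rfl⟩) fun ω => hRcard (W ω)
end

section
/- Let (E, 𝓔) be a measurable space and let μ and ν be finite measures on E with μ atomless. Let A ∈ 𝓔 with μ(A) = α₀ > 0 and ν(A) = α₀ + d for some d ≥ 0, and let β ∈ [0, α₀]. Then sup { ν(B) : B ∈ 𝓔, B ⊆ A, μ(B) = β } ≥ β + d·β/α₀. -/
open MeasureTheory ENNReal

/-!
Let `c = ν A / μ A`. A set `s` of a Hahn decomposition of `A` for `ν` against `c • μ` collects the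
points where `ν` is relatively large. An atomless measure takes every intermediate value on a set
between two given nested sets. If `β ≤ μ s`, choose `B ⊆ s`, where `ν ≥ c • μ`; otherwise choose
`B` between `s` and `A`: then `ν ≤ c • μ` on `A \ B`, while the totals over `A` agree. In both cases
`ν B ≥ c * β`. If `ν A = ∞`, repeated halving of `A` finds a set of arbitrarily small `μ`-measure
that still has infinite `ν`-measure, and `B` is taken to contain it.
-/

/-- A measure is atomless if every measurable set of positive measure has a measurable subset of
strictly smaller positive measure. Asking only that points be null would not suffice for the
intermediate value property. Sets of infinite measure are included, so they must contain measurable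
sets of finite positive measure. -/
def IsAtomless {E : Type*} [MeasurableSpace E] (μ : Measure E) : Prop :=
  ∀ B : Set E, MeasurableSet B → 0 < μ B → ∃ C ⊆ B, MeasurableSet C ∧ 0 < μ C ∧ μ C < μ B

section Order

variable {α : Type*} [Preorder α]

-- The sequence of choices beats the `n`-th term of a countable dense set at step `n` whenever that
-- is still possible, so no value of the dense set can separate the limit from a larger element.
theorem exists_ge_forall_ge_map_le_of_monotone {β : Type*} [LinearOrder β] [TopologicalSpace β]
    [OrderClosedTopology β] [DenselyOrdered β] [TopologicalSpace.SeparableSpace β] {φ : α → β}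
    (hφ : Monotone φ) (hbdd : ∀ u : ℕ → α, Monotone u → BddAbove (Set.range u)) (x₀ : α) :
    ∃ x ≥ x₀, ∀ y ≥ x, φ y ≤ φ x := by
  have : Nonempty β := ⟨φ x₀⟩
  let q := TopologicalSpace.denseSeq β
  have exists_next (n : ℕ) (x : α) : ∃ z ≥ x, ∀ y ≥ x, q n < φ y → q n < φ z := by
    by_cases h : ∃ y ≥ x, q n < φ y
    · obtain ⟨y, hxy, hy⟩ := h
      exact ⟨y, hxy, fun _ _ _ ↦ hy⟩
    · exact ⟨x, le_rfl, fun y hxy hy ↦ absurd ⟨y, hxy, hy⟩ h⟩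
  choose next le_next lt_next using exists_next
  let u : ℕ → α := fun n ↦ Nat.rec x₀ next n
  obtain ⟨x, hx⟩ := hbdd u (monotone_nat_of_le_succ fun n ↦ le_next n (u n))
  have u_le (n : ℕ) : u n ≤ x := hx (Set.mem_range_self n)
  refine ⟨x, u_le 0, fun y hxy ↦ ?_⟩
  by_contra! hlt
  obtain ⟨_, ⟨n, rfl⟩, hxq, hqy⟩ := (TopologicalSpace.denseRange_denseSeq β).exists_between hlt
  have hqx : q n < φ x :=
    (lt_next n (u n) y ((u_le n).trans hxy) hqy).trans_le (hφ (u_le (n + 1)))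
  exact hxq.not_gt hqx

theorem exists_le_map_le_of_halving {f : α → ℝ≥0∞} {P : α → Prop}
    (halve : ∀ x, P x → ∃ y ≤ x, P y ∧ 2 * f y ≤ f x) {x : α} (hx : P x) (hfx : f x ≠ ∞)
    {ε : ℝ≥0∞} (hε : ε ≠ 0) : ∃ y ≤ x, P y ∧ f y ≤ ε := by
  have iterate (n : ℕ) : ∃ y ≤ x, P y ∧ 2 ^ n * f y ≤ f x := by
    induction n with
    | zero => exact ⟨x, le_rfl, hx, by simp⟩
    | succ n ih =>
      obtain ⟨y, hyx, hy, hfy⟩ := ih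
      obtain ⟨z, hzy, hz, hfz⟩ := halve y hy
      refine ⟨z, hzy.trans hyx, hz, le_trans ?_ hfy⟩
      rw [pow_succ, mul_assoc]
      gcongr
  obtain ⟨n, hn⟩ := ENNReal.exists_nat_mul_gt hε hfx
  obtain ⟨y, hyx, hy, hfy⟩ := iterate n
  refine ⟨y, hyx, hy, ?_⟩
  have hn_pow : (n : ℝ≥0∞) ≤ 2 ^ n := mod_cast n.lt_two_pow_self.le
  by_contra! hlt
  exact (hn.trans_le ((mul_le_mul' hn_pow hlt.le).trans hfy)).false

end Order

section Measure

variable {E : Type*} [MeasurableSpace E] {μ ν : Measure E} {A B C : Set E} {β ε : ℝ≥0∞}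

theorem measure_add_measure_sdiff (hB : MeasurableSet B) (hBA : B ⊆ A) :
    μ B + μ (A \ B) = μ A := by
  rw [← measure_inter_add_sdiff A hB, Set.inter_eq_self_of_subset_right hBA]

theorem exists_maximal_measure_le (hC : MeasurableSet C) (hCA : C ⊆ A) (hμC : μ C ≤ β) :
    ∃ U, C ⊆ U ∧ U ⊆ A ∧ MeasurableSet U ∧ μ U ≤ β ∧
      ∀ D, MeasurableSet D → U ⊆ D → D ⊆ A → μ D ≤ β → μ D ≤ μ U := by
  let S := {D : Set E // MeasurableSet D ∧ D ⊆ A ∧ μ D ≤ β}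
  have bddAbove_range (u : ℕ → S) (hu : Monotone u) : BddAbove (Set.range u) := by
    have hmono : Monotone fun n ↦ (u n).1 := fun _ _ h ↦ hu h
    refine ⟨⟨⋃ n, (u n).1, .iUnion fun n ↦ (u n).2.1, Set.iUnion_subset fun n ↦ (u n).2.2.1, ?_⟩,
      Set.forall_mem_range.2 fun n ↦ Set.subset_iUnion (fun n ↦ (u n).1) n⟩
    rw [hmono.measure_iUnion]
    exact iSup_le fun n ↦ (u n).2.2.2
  have hμ_mono : Monotone fun D : S ↦ μ D.1 := fun _ _ h ↦ measure_mono h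
  obtain ⟨⟨U, hU, hUA, hμU⟩, hCU, hmax⟩ :=
    exists_ge_forall_ge_map_le_of_monotone hμ_mono bddAbove_range ⟨C, hC, hCA, hμC⟩
  exact ⟨U, hCU, hUA, hU, hμU, fun D hD hUD hDA hμD ↦ hmax ⟨D, hD, hDA, hμD⟩ hUD⟩

theorem exists_subset_mul_measure_le_and_ge (hA : MeasurableSet A) (hμA : μ A ≠ ∞)
    (hνA : ν A ≠ ∞) (c : NNReal) :
    ∃ s ⊆ A, MeasurableSet s ∧ (∀ B, MeasurableSet B → B ⊆ s → c * μ B ≤ ν B) ∧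
      ∀ B, MeasurableSet B → B ⊆ A \ s → ν B ≤ c * μ B := by
  have : IsFiniteMeasure (μ.restrict A) := isFiniteMeasure_restrict.2 hμA
  have : IsFiniteMeasure (ν.restrict A) := isFiniteMeasure_restrict.2 hνA
  obtain ⟨s, hs, hν_ge, hν_le⟩ := hahn_decomposition (ν.restrict A) (c • μ.restrict A)
  simp only [Measure.smul_apply, ENNReal.smul_def, smul_eq_mul] at hν_ge hν_le
  refine ⟨A ∩ s, Set.inter_subset_left, hA.inter hs, fun B hB hBs ↦ ?_, fun B hB hBs ↦ ?_⟩
  · have hBA : B ⊆ A := hBs.trans Set.inter_subset_left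
    simpa only [Measure.restrict_eq_self _ hBA] using
      hν_ge B hB (hBs.trans Set.inter_subset_right)
  · have hBA : B ⊆ A := hBs.trans Set.sdiff_subset
    simpa only [Measure.restrict_eq_self _ hBA] using
      hν_le B hB fun x hx hxs ↦ (hBs hx).2 ⟨hBA hx, hxs⟩

namespace IsAtomless

theorem exists_subset_two_mul_measure_le (hμ : IsAtomless μ) (hB : MeasurableSet B)
    (hμB : 0 < μ B) : ∃ C ⊆ B, (MeasurableSet C ∧ 0 < μ C) ∧ 2 * μ C ≤ μ B := by
  obtain ⟨D, hDB, hD, hμD, hlt⟩ := hμ B hB hμB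
  have hsum : μ D + μ (B \ D) = μ B := measure_add_measure_sdiff hD hDB
  rcases le_total (μ D) (μ (B \ D)) with hle | hle
  · exact ⟨D, hDB, ⟨hD, hμD⟩, by rw [two_mul, ← hsum]; gcongr⟩
  · have hdiff : μ (B \ D) ≠ 0 := fun h ↦ hlt.ne (by rw [← hsum, h, add_zero])
    exact ⟨B \ D, Set.sdiff_subset, ⟨hB.diff hD, hdiff.pos⟩, by rw [two_mul, ← hsum]; gcongr⟩

theorem exists_subset_measure_pos_le (hμ : IsAtomless μ) (hB : MeasurableSet B)
    (hμB : 0 < μ B) (hε : ε ≠ 0) : ∃ C ⊆ B, MeasurableSet C ∧ 0 < μ C ∧ μ C ≤ ε := by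
  obtain ⟨D, hDB, hD, hμD, hlt⟩ := hμ B hB hμB
  obtain ⟨C, hCD, ⟨hC, hμC⟩, hle⟩ := exists_le_map_le_of_halving
    (fun F hF ↦ hμ.exists_subset_two_mul_measure_le hF.1 hF.2) ⟨hD, hμD⟩ hlt.ne_top hε
  exact ⟨C, hCD.trans hDB, hC, hμC, hle⟩

theorem exists_between_measure_eq (hμ : IsAtomless μ) (hC : MeasurableSet C)
    (hA : MeasurableSet A) (hCA : C ⊆ A) (hCβ : μ C ≤ β) (hβA : β ≤ μ A) :
    ∃ B, C ⊆ B ∧ B ⊆ A ∧ MeasurableSet B ∧ μ B = β := by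
  obtain ⟨U, hCU, hUA, hU, hUβ, hmax⟩ := exists_maximal_measure_le hC hCA hCβ
  refine ⟨U, hCU, hUA, hU, hUβ.antisymm (not_lt.1 fun hlt ↦ ?_)⟩
  have hdiff : 0 < μ (A \ U) := (tsub_pos_of_lt (hlt.trans_le hβA)).trans_le le_measure_sdiff
  obtain ⟨D, hDsub, hD, hμD, hDle⟩ :=
    hμ.exists_subset_measure_pos_le (hA.diff hU) hdiff (tsub_pos_of_lt hlt).ne'
  have hμ_union : μ (U ∪ D) = μ U + μ D :=
    measure_union (Set.disjoint_sdiff_right.mono_right hDsub) hD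
  have h_union_le : μ (U ∪ D) ≤ β := by
    rw [hμ_union, ← add_tsub_cancel_of_le hUβ]
    gcongr
  have hle : μ U + μ D ≤ μ U := hμ_union ▸ hmax (U ∪ D) (hU.union hD) Set.subset_union_left
    (Set.union_subset hUA (hDsub.trans Set.sdiff_subset)) h_union_le
  exact hle.not_gt (ENNReal.lt_add_right hlt.ne_top hμD.ne')

theorem exists_subset_two_mul_measure_le_of_measure_eq_top (hμ : IsAtomless μ)
    (hA : MeasurableSet A) (hνA : ν A = ∞) :
    ∃ C ⊆ A, (MeasurableSet C ∧ ν C = ∞) ∧ 2 * μ C ≤ μ A := by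
  by_cases hμA : μ A = ∞
  · exact ⟨A, subset_rfl, ⟨hA, hνA⟩, hμA ▸ le_top⟩
  obtain ⟨D, -, hDA, hD, hμD⟩ : ∃ D, ∅ ⊆ D ∧ D ⊆ A ∧ MeasurableSet D ∧ μ D = μ A / 2 :=
    hμ.exists_between_measure_eq .empty hA (Set.empty_subset A) (by simp) ENNReal.half_le_self
  have hμ_sdiff : μ (A \ D) = μ A / 2 := by
    rw [measure_sdiff hDA hD.nullMeasurableSet (measure_ne_top_of_subset hDA hμA), hμD,
      ENNReal.sub_half hμA]
  have htwo : 2 * (μ A / 2) = μ A := ENNReal.mul_div_cancel two_ne_zero ofNat_ne_top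
  have hν : ν D = ∞ ∨ ν (A \ D) = ∞ := by
    rw [← ENNReal.add_eq_top, measure_add_measure_sdiff hD hDA, hνA]
  rcases hν with hν | hν
  · exact ⟨D, hDA, ⟨hD, hν⟩, by rw [hμD, htwo]⟩
  · exact ⟨A \ D, Set.sdiff_subset, ⟨hA.diff hD, hν⟩, by rw [hμ_sdiff, htwo]⟩

theorem exists_subset_measure_eq_and_measure_eq_top (hμ : IsAtomless μ) (hA : MeasurableSet A)
    (hμA : μ A ≠ ∞) (hνA : ν A = ∞) (hβ₀ : β ≠ 0) (hβ : β ≤ μ A) :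
    ∃ B ⊆ A, MeasurableSet B ∧ μ B = β ∧ ν B = ∞ := by
  obtain ⟨C, hCA, ⟨hC, hνC⟩, hCβ⟩ := exists_le_map_le_of_halving
    (fun F hF ↦ hμ.exists_subset_two_mul_measure_le_of_measure_eq_top hF.1 hF.2)
    ⟨hA, hνA⟩ hμA hβ₀
  obtain ⟨B, hCB, hBA, hB, hμB⟩ := hμ.exists_between_measure_eq hC hA hCA hCβ hβ
  exact ⟨B, hBA, hB, hμB, measure_mono_top hCB hνC⟩

theorem exists_subset_measure_eq_mul_le_of_ne_top (hμ : IsAtomless μ) (hA : MeasurableSet A)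
    (hμA : μ A ≠ ∞) (hνA : ν A ≠ ∞) {c : NNReal} (hc : c * μ A ≤ ν A) (hβ : β ≤ μ A) :
    ∃ B ⊆ A, MeasurableSet B ∧ μ B = β ∧ c * β ≤ ν B := by
  obtain ⟨s, hsA, hs, hν_ge, hν_le⟩ := exists_subset_mul_measure_le_and_ge hA hμA hνA c
  rcases le_total β (μ s) with hβs | hsβ
  · obtain ⟨B, -, hBs, hB, rfl⟩ :=
      hμ.exists_between_measure_eq .empty hs (Set.empty_subset s) (by simp) hβs
    exact ⟨B, hBs.trans hsA, hB, rfl, hν_ge B hB hBs⟩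
  · obtain ⟨B, hsB, hBA, hB, rfl⟩ := hμ.exists_between_measure_eq hs hA hsA hsβ hβ
    refine ⟨B, hBA, hB, rfl, ?_⟩
    have hfin : c * μ (A \ B) ≠ ∞ :=
      ENNReal.mul_ne_top coe_ne_top (measure_ne_top_of_subset Set.sdiff_subset hμA)
    refine (ENNReal.add_le_add_iff_right hfin).1 ?_
    calc c * μ B + c * μ (A \ B) = c * μ A := by
          rw [← mul_add, measure_add_measure_sdiff hB hBA]
      _ ≤ ν A := hc
      _ = ν B + ν (A \ B) := (measure_add_measure_sdiff hB hBA).symm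
      _ ≤ ν B + c * μ (A \ B) := by
          gcongr
          exact hν_le _ (hA.diff hB) (Set.sdiff_subset_sdiff_right hsB)

theorem exists_subset_measure_eq_mul_le (hμ : IsAtomless μ) (hA : MeasurableSet A)
    (hμA : μ A ≠ ∞) {c : ℝ≥0∞} (hc : c * μ A ≤ ν A) (hβ : β ≤ μ A) :
    ∃ B ⊆ A, MeasurableSet B ∧ μ B = β ∧ c * β ≤ ν B := by
  rcases eq_or_ne β 0 with rfl | hβ₀
  · exact ⟨∅, Set.empty_subset A, .empty, measure_empty, by simp⟩
  by_cases hνA : ν A = ∞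
  · obtain ⟨B, hBA, hB, hμB, hνB⟩ :=
      hμ.exists_subset_measure_eq_and_measure_eq_top hA hμA hνA hβ₀ hβ
    exact ⟨B, hBA, hB, hμB, hνB ▸ le_top⟩
  · have hμA₀ : μ A ≠ 0 := (hβ₀.pos.trans_le hβ).ne'
    lift c to NNReal using (ENNReal.lt_top_of_mul_ne_top_left (ne_top_of_le_ne_top hνA hc) hμA₀).ne
    exact hμ.exists_subset_measure_eq_mul_le_of_ne_top hA hμA hνA hc hβ

end IsAtomless

end Measure

theorem crrt_stmt_11_general {E : Type*} [MeasurableSpace E] (μ ν : Measure E)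
    (hμ : IsAtomless μ) (A : Set E) (hA : MeasurableSet A) (α₀ d β : ℝ≥0∞) (hα₀ : μ A = α₀)
    (hα₀pos : 0 < α₀) (hα₀fin : α₀ ≠ ∞) (hνA : ν A = α₀ + d) (hβ : β ≤ α₀) :
    ∃ B, MeasurableSet B ∧ B ⊆ A ∧ μ B = β ∧ β + d * β / α₀ ≤ ν B := by
  subst hα₀
  have htotal : (μ A + d) / μ A * μ A ≤ ν A := by
    rw [ENNReal.div_mul_cancel hα₀pos.ne' hα₀fin, hνA]
  have hshare : β + d * β / μ A = (μ A + d) / μ A * β := by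
    rw [ENNReal.add_div, ENNReal.div_self hα₀pos.ne' hα₀fin, add_mul, one_mul,
      ENNReal.mul_div_right_comm]
  obtain ⟨B, hBA, hB, hμB, hνB⟩ := hμ.exists_subset_measure_eq_mul_le hA hα₀fin htotal hβ
  exact ⟨B, hB, hBA, hμB, hshare ▸ hνB⟩

/-- **Measure-splitting lemma (first case in Theorem 4).**
Let `μ, ν` be finite measures with `μ` atomless (every measurable set of positive
`μ`-measure contains a measurable subset of strictly intermediate measure).
If `μ(A) = α₀ > 0` and `ν(A) = α₀ + d`, then for every `β ≤ α₀`,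
`sup { ν(B) : B ⊆ A measurable, μ(B) = β } ≥ β + d·β/α₀`. -/
theorem crrt_stmt_11 {E : Type*} [MeasurableSpace E] (μ ν : Measure E)
    [IsFiniteMeasure μ] [IsFiniteMeasure ν]
    (hatomless : ∀ B : Set E, MeasurableSet B → 0 < μ B →
      ∃ C ⊆ B, MeasurableSet C ∧ 0 < μ C ∧ μ C < μ B)
    (A : Set E) (hA : MeasurableSet A)
    (α₀ d β : ℝ≥0∞) (hα₀ : μ A = α₀) (hα₀pos : 0 < α₀)
    (hνA : ν A = α₀ + d) (hβ : β ≤ α₀) :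
    β + d * β / α₀ ≤
      ⨆ (B : Set E) (_ : MeasurableSet B) (_ : B ⊆ A) (_ : μ B = β), ν B := by
  obtain ⟨B, hB, hBA, hμB, hνB⟩ := crrt_stmt_11_general μ ν hatomless A hA α₀ d β hα₀ hα₀pos
    (hα₀ ▸ measure_ne_top μ A) hνA hβ
  exact hνB.trans (le_iSup₂_of_le B hB (le_iSup₂_of_le hBA hμB le_rfl))
end

section
/- Let (E, 𝓔) be a measurable space and let μ and ν be probability measures on E with μ atomless. Let A ∈ 𝓔 with μ(A) = α₀ < 1 and ν(A) = α₀ + d for some d ≥ 0, and let β ∈ [α₀, 1]. Then sup { ν(B) : B ∈ 𝓔, A ⊆ B, μ(B) = β } ≥ β + d·(1 − β)/(1 − α₀). -/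
open MeasureTheory ENNReal

/-!
On `Aᶜ` compare the two finite measures `ν(Aᶜ) • μ` and `μ(Aᶜ) • ν`, which give `Aᶜ` the same mass.
By Sierpiński's theorem a set `D ⊆ Aᶜ` of `μ`-measure `β - α₀` can be chosen inside the Hahn set
where the second measure dominates, or containing it when it is too small. Either way the share of
`D` in `ν(Aᶜ)` is at least its share in `μ(Aᶜ)`, and `B = A ∪ D` does the job.
-/

/- Run once through a dense sequence of thresholds, passing each one if it can still be passed:
an upper bound of the resulting sequence cannot be improved past any threshold. -/
theorem exists_forall_ge_apply_le_of_monotone {α β : Type*} [Preorder α] [Nonempty α]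
    [LinearOrder β] [DenselyOrdered β] [TopologicalSpace β] [OrderClosedTopology β]
    [TopologicalSpace.SeparableSpace β] {f : α → β} (hf : Monotone f)
    (hbdd : ∀ u : ℕ → α, Monotone u → BddAbove (Set.range u)) :
    ∃ m, ∀ x, m ≤ x → f x ≤ f m := by
  obtain ⟨a⟩ := ‹Nonempty α›
  have : Nonempty β := ⟨f a⟩
  let q := TopologicalSpace.denseSeq β
  have pass_threshold (n : ℕ) (x : α) : ∃ y, x ≤ y ∧ ((∃ z, x ≤ z ∧ q n < f z) → q n < f y) := by
    by_cases h : ∃ z, x ≤ z ∧ q n < f z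
    · obtain ⟨z, hxz, hz⟩ := h
      exact ⟨z, hxz, fun _ ↦ hz⟩
    · exact ⟨x, le_rfl, fun h' ↦ absurd h' h⟩
  choose next le_next lt_next using pass_threshold
  let u : ℕ → α := Nat.rec a next
  obtain ⟨m, hm⟩ := hbdd u (monotone_nat_of_le_succ fun n ↦ le_next n (u n))
  have u_le (n : ℕ) : u n ≤ m := hm ⟨n, rfl⟩
  refine ⟨m, fun x hmx ↦ not_lt.1 fun hlt ↦ ?_⟩
  obtain ⟨_, ⟨n, rfl⟩, hmn, hnx⟩ :=
    (TopologicalSpace.denseRange_denseSeq β).exists_between hlt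
  have hpassed : q n < f (u (n + 1)) := lt_next n (u n) ⟨x, (u_le n).trans hmx, hnx⟩
  exact (hmn.trans hpassed).not_ge (hf (u_le (n + 1)))

lemma exists_maximal_subset_measure_le {E : Type*} [MeasurableSpace E] (μ : Measure E) (B : Set E)
    (r : ℝ≥0∞) :
    ∃ M ⊆ B, MeasurableSet M ∧ μ M ≤ r ∧
      ∀ D ⊆ B, MeasurableSet D → μ D ≤ r → M ⊆ D → μ D ≤ μ M := by
  let 𝒟 := {D : Set E // D ⊆ B ∧ MeasurableSet D ∧ μ D ≤ r}
  have : Nonempty 𝒟 := ⟨∅, Set.empty_subset B, .empty, by simp⟩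
  have hmono : Monotone fun D : 𝒟 ↦ μ D.1 := fun _ _ h ↦ measure_mono h
  obtain ⟨⟨M, hMB, hM, hMr⟩, hmax⟩ :=
    exists_forall_ge_apply_le_of_monotone hmono fun u hu ↦ by
      refine ⟨⟨⋃ n, (u n).1, Set.iUnion_subset fun n ↦ (u n).2.1,
        .iUnion fun n ↦ (u n).2.2.1, ?_⟩, ?_⟩
      · rw [Monotone.measure_iUnion fun _ _ h ↦ hu h]
        exact iSup_le fun n ↦ (u n).2.2.2
      · rintro _ ⟨n, rfl⟩
        exact Set.subset_iUnion (fun n ↦ (u n).1) n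
  exact ⟨M, hMB, hM, hMr, fun D hDB hD hDr hMD ↦ hmax ⟨D, hDB, hD, hDr⟩ hMD⟩

namespace IsAtomless

variable {E : Type*} [MeasurableSpace E] {μ : Measure E} {B : Set E} {r : ℝ≥0∞}

lemma exists_subset_measure_le_half (hμ : IsAtomless μ) (hB : MeasurableSet B) (hB₀ : 0 < μ B) :
    ∃ C ⊆ B, MeasurableSet C ∧ 0 < μ C ∧ μ C ≤ μ B / 2 := by
  obtain ⟨C, hCB, hC, hC₀, hlt⟩ := hμ B hB hB₀
  have hadd : μ C + μ (B \ C) = μ B := by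
    rw [← measure_inter_add_sdiff B hC, Set.inter_eq_self_of_subset_right hCB]
  have le_half {x : ℝ≥0∞} (hx : x + x ≤ μ B) : x ≤ μ B / 2 := by
    rwa [ENNReal.le_div_iff_mul_le (by simp) (by simp), mul_two]
  rcases le_total (μ C) (μ (B \ C)) with hle | hle
  · exact ⟨C, hCB, hC, hC₀, le_half (hadd ▸ by gcongr)⟩
  · refine ⟨B \ C, Set.sdiff_subset, hB.diff hC, pos_iff_ne_zero.2 fun h₀ ↦ ?_,
      le_half (hadd ▸ by gcongr)⟩
    rw [h₀, add_zero] at hadd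
    exact hlt.ne hadd

lemma exists_subset_measure_le (hμ : IsAtomless μ) (hB : MeasurableSet B) (hB₀ : 0 < μ B)
    (hr : 0 < r) : ∃ C ⊆ B, MeasurableSet C ∧ 0 < μ C ∧ μ C ≤ r := by
  obtain ⟨F, hFB, hF, hF₀, hFlt⟩ := hμ B hB hB₀
  have halve (n : ℕ) : ∃ C ⊆ F, MeasurableSet C ∧ 0 < μ C ∧ μ C ≤ μ F * 2⁻¹ ^ n := by
    induction n with
    | zero => exact ⟨F, subset_rfl, hF, hF₀, by simp⟩
    | succ n ih =>
      obtain ⟨C, hCF, hC, hC₀, hCle⟩ := ih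
      obtain ⟨C', hC'C, hC', hC'₀, hC'le⟩ := hμ.exists_subset_measure_le_half hC hC₀
      refine ⟨C', hC'C.trans hCF, hC', hC'₀, hC'le.trans ?_⟩
      rw [pow_succ, ← mul_assoc, ← div_eq_mul_inv]
      gcongr
  have htendsto : Filter.Tendsto (fun n : ℕ ↦ μ F * 2⁻¹ ^ n) Filter.atTop (nhds 0) := by
    simpa using ENNReal.Tendsto.const_mul
      (ENNReal.tendsto_pow_atTop_nhds_zero_of_lt_one (by simp)) (.inr hFlt.ne_top)
  obtain ⟨n, hn⟩ := (htendsto.eventually_le_const hr).exists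
  obtain ⟨C, hCF, hC, hC₀, hCle⟩ := halve n
  exact ⟨C, hCF.trans hFB, hC, hC₀, hCle.trans hn⟩

/-- **Sierpiński's theorem** on the range of an atomless measure. -/
theorem exists_subset_measure_eq (hμ : IsAtomless μ) (hB : MeasurableSet B) (hr : r ≤ μ B) :
    ∃ D ⊆ B, MeasurableSet D ∧ μ D = r := by
  obtain ⟨M, hMB, hM, hMr, hmax⟩ := exists_maximal_subset_measure_le μ B r
  refine ⟨M, hMB, hM, hMr.eq_of_not_lt fun hlt ↦ ?_⟩
  have hrest : 0 < μ (B \ M) :=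
    (tsub_pos_of_lt (hlt.trans_le hr)).trans_le le_measure_sdiff
  obtain ⟨P, hPB, hP, hP₀, hPle⟩ :=
    hμ.exists_subset_measure_le (hB.diff hM) hrest (tsub_pos_of_lt hlt)
  have hunion : μ (M ∪ P) = μ M + μ P :=
    measure_union (Set.disjoint_sdiff_right.mono_right hPB) hP
  have hgrow : μ M < μ (M ∪ P) := hunion ▸ ENNReal.lt_add_right hlt.ne_top hP₀.ne'
  refine hgrow.not_ge (hmax _ (Set.union_subset hMB (hPB.trans Set.sdiff_subset)) (hM.union hP) ?_
    Set.subset_union_left)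
  calc μ (M ∪ P) = μ M + μ P := hunion
    _ ≤ μ M + (r - μ M) := by gcongr
    _ = r := add_tsub_cancel_of_le hMr

/- If the Hahn set `P` on which `ρ ≤ τ` is too small to contain `D`, remove from `B` a part of
`B \ P` instead: this lowers `ρ` by at least as much as `τ`. -/
lemma exists_subset_measure_eq_of_measure_le (hμ : IsAtomless μ) {ρ τ : Measure E}
    [IsFiniteMeasure ρ] [IsFiniteMeasure τ] (hB : MeasurableSet B) (hμB : μ B ≠ ∞)
    (hle : ρ B ≤ τ B) (hr : r ≤ μ B) :
    ∃ D ⊆ B, MeasurableSet D ∧ μ D = r ∧ ρ D ≤ τ D := by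
  obtain ⟨P, hP, hρτ, hτρ⟩ := hahn_decomposition τ ρ
  rcases le_total r (μ (B ∩ P)) with hrP | hPr
  · obtain ⟨D, hDBP, hD, hμD⟩ := hμ.exists_subset_measure_eq (hB.inter hP) hrP
    exact ⟨D, hDBP.trans Set.inter_subset_left, hD, hμD,
      hρτ D hD (hDBP.trans Set.inter_subset_right)⟩
  · have hrest : μ B - r ≤ μ (B \ P) := by
      rw [tsub_le_iff_left, ← measure_inter_add_sdiff B hP]
      gcongr
    obtain ⟨D, hDBP, hD, hμD⟩ := hμ.exists_subset_measure_eq (hB.diff hP) hrest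
    have hDB : D ⊆ B := hDBP.trans Set.sdiff_subset
    have measure_rest (κ : Measure E) (hκ : κ D ≠ ∞) : κ (B \ D) = κ B - κ D :=
      measure_sdiff hDB hD.nullMeasurableSet hκ
    refine ⟨B \ D, Set.sdiff_subset, hB.diff hD, ?_, ?_⟩
    · rw [measure_rest μ (measure_ne_top_of_subset hDB hμB), hμD,
        ENNReal.sub_sub_cancel hμB hr]
    · rw [measure_rest ρ (measure_ne_top ρ D), measure_rest τ (measure_ne_top τ D)]
      exact tsub_le_tsub hle (hτρ D hD fun x hx ↦ (hDBP hx).2)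

variable {ν : Measure E} [IsFiniteMeasure μ] [IsFiniteMeasure ν]

lemma exists_subset_measure_eq_mul_le_mul (hμ : IsAtomless μ) (hB : MeasurableSet B)
    (hr : r ≤ μ B) : ∃ D ⊆ B, MeasurableSet D ∧ μ D = r ∧ r * ν B ≤ ν D * μ B := by
  have : IsFiniteMeasure (ν B • μ) := μ.smul_finite (measure_ne_top ν B)
  have : IsFiniteMeasure (μ B • ν) := ν.smul_finite (measure_ne_top μ B)
  have hmass : (ν B • μ) B ≤ (μ B • ν) B := by
    simp only [Measure.smul_apply, smul_eq_mul, mul_comm, le_refl]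
  obtain ⟨D, hDB, hD, rfl, hle⟩ :=
    hμ.exists_subset_measure_eq_of_measure_le hB (measure_ne_top μ B) hmass hr
  refine ⟨D, hDB, hD, rfl, ?_⟩
  simpa only [Measure.smul_apply, smul_eq_mul, mul_comm] using hle

theorem exists_superset_measure_eq_add_mul_div_le (hμ : IsAtomless μ) {A : Set E}
    (hA : MeasurableSet A) (hAr : μ A ≤ r) (hr : r ≤ μ Set.univ) :
    ∃ B, MeasurableSet B ∧ A ⊆ B ∧ μ B = r ∧ ν A + (r - μ A) * ν Aᶜ / μ Aᶜ ≤ ν B := by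
  have hgap : r - μ A ≤ μ Aᶜ := by
    rwa [tsub_le_iff_left, measure_add_measure_compl hA]
  obtain ⟨D, hDA, hD, hμD, hνD⟩ :=
    hμ.exists_subset_measure_eq_mul_le_mul (ν := ν) hA.compl hgap
  have hdisj : Disjoint A D := disjoint_compl_right.mono_right hDA
  refine ⟨A ∪ D, hA.union hD, Set.subset_union_left, ?_, ?_⟩
  · rw [measure_union hdisj hD, hμD, add_tsub_cancel_of_le hAr]
  · rw [measure_union hdisj hD]
    gcongr
    exact ENNReal.div_le_of_le_mul hνD

end IsAtomless

lemma add_mul_div_eq_add_mul_div_of_add_eq_add {t s d e m : ℝ≥0∞} (hts : t + s = m)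
    (hde : d + e = m) (hm₀ : m ≠ 0) (hm : m ≠ ∞) : t + d * s / m = d + t * e / m := by
  have mul_div_m (x : ℝ≥0∞) : x * m / m = x := ENNReal.mul_div_cancel_right hm₀ hm
  calc t + d * s / m = t * (d + e) / m + d * s / m := by rw [hde, mul_div_m]
    _ = d * (t + s) / m + t * e / m := by
      simp only [← ENNReal.add_div]
      ring_nf
    _ = d + t * e / m := by rw [hts, mul_div_m]

/-- **Measure-enlarging lemma (second case in Theorem 4).**
Let `μ, ν` be probability measures with `μ` atomless (every measurable set of positive
`μ`-measure contains a measurable subset of strictly intermediate measure).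
If `μ(A) = α₀ < 1` and `ν(A) = α₀ + d`, then for every `β` with `α₀ ≤ β ≤ 1`,
`sup { ν(B) : B ⊇ A measurable, μ(B) = β } ≥ β + d·(1 − β)/(1 − α₀)`. -/
theorem crrt_stmt_12 {E : Type*} [MeasurableSpace E] (μ ν : Measure E)
    [IsProbabilityMeasure μ] [IsProbabilityMeasure ν]
    (hatomless : ∀ B : Set E, MeasurableSet B → 0 < μ B →
      ∃ C ⊆ B, MeasurableSet C ∧ 0 < μ C ∧ μ C < μ B)
    (A : Set E) (hA : MeasurableSet A)
    (α₀ d β : ℝ≥0∞) (hα₀ : μ A = α₀) (hα₀lt : α₀ < 1)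
    (hνA : ν A = α₀ + d) (hβ₁ : α₀ ≤ β) (hβ₂ : β ≤ 1) :
    β + d * (1 - β) / (1 - α₀) ≤
      ⨆ (B : Set E) (_ : MeasurableSet B) (_ : A ⊆ B) (_ : μ B = β), ν B := by
  obtain ⟨B, hB, hAB, hμB, hνB⟩ :=
    IsAtomless.exists_superset_measure_eq_add_mul_div_le (ν := ν) hatomless hA (hα₀.trans_le hβ₁)
      (hβ₂.trans_eq measure_univ.symm)
  refine le_iSup₂_of_le B hB (le_iSup₂_of_le hAB hμB ?_)
  have hα₀top : α₀ ≠ ∞ := hα₀lt.ne_top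
  have hμAc : μ Aᶜ = 1 - α₀ := by rw [prob_compl_eq_one_sub hA, hα₀]
  have hgaps : (β - α₀) + (1 - β) = 1 - α₀ := by
    rw [add_comm, tsub_add_tsub_cancel hβ₂ hβ₁]
  have hνAc : d + ν Aᶜ = 1 - α₀ := by
    refine ENNReal.eq_sub_of_add_eq hα₀top ?_
    rw [← prob_add_prob_compl (μ := ν) hA, hνA]
    ring
  calc β + d * (1 - β) / (1 - α₀)
      = α₀ + ((β - α₀) + d * (1 - β) / (1 - α₀)) := by
        rw [← add_assoc, add_tsub_cancel_of_le hβ₁]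
    _ = α₀ + (d + (β - α₀) * ν Aᶜ / (1 - α₀)) := by
        rw [add_mul_div_eq_add_mul_div_of_add_eq_add hgaps hνAc (tsub_pos_of_lt hα₀lt).ne'
          (by simp)]
    _ = ν A + (β - μ A) * ν Aᶜ / μ Aᶜ := by rw [hνA, hα₀, hμAc, add_assoc]
    _ ≤ ν B := hνB
end

section
/- Let b ≥ 1, let λ ∈ {1, …, b}, let ε ≥ 0, and let M_0 ≥ M_1 ≥ … ≥ M_b ≥ 0 be real numbers with M_0 > 0 and M_0 ≥ e^{ε} · M_λ. Write S = M_0 + M_1 + … + M_b. Then ( (M_0 + M_1 + … + M_{λ−1})/S − λ/(b+1) ) · (S / M_0) ≥ (1 − λ/(b+1)) · (1 − e^{−ε}). -/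
/-!
Multiplying out the normalization, the claim bounds below the excess
`∑ i ∈ s, M i - (#s / n) * ∑ i, M i`, where `s = {0, …, λ - 1}` and `n = b + 1`. The excess vanishes
on constants, so `M` may be replaced by `M - m`, where `m = M_λ` separates the weights in `s` from
those outside it. After this shift it is `1 - #s / n` times a sum of nonnegative terms, one of them
`M_0 - m`, minus `#s / n` times a sum of nonpositive terms. Hence it is at least
`(1 - #s / n) * (M_0 - m)`, and the gap hypothesis gives `m ≤ e^{-ε} * M_0`.
-/

section Excess

open Finset

variable {ι K : Type*} [Fintype ι] [Field K]

theorem nnratCast_dens_filter_val_lt [CharZero K] {n k : ℕ} (hk : k ≤ n) :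
    ((univ.filter fun i : Fin n ↦ i.val < k).dens : K) = k / n := by
  rw [nnratCast_dens, Fin.card_filter_val_lt, min_eq_right hk, Fintype.card_fin]

/-- The excess of the mass that the weights `f` put on `s` over the share that the uniform weights
of the same total mass would put there. It is not normalized by the total mass. -/
def excess (s : Finset ι) (f : ι → K) : K :=
  ∑ i ∈ s, f i - s.dens * ∑ i, f i

theorem sum_div_sum_sub_dens_mul_sum_div {s : Finset ι} {f : ι → K} (hf : ∑ i, f i ≠ 0) (x : K) :
    ((∑ i ∈ s, f i) / ∑ i, f i - s.dens) * ((∑ i, f i) / x) = excess s f / x := by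
  rw [← mul_div_assoc, sub_mul, div_mul_cancel₀ _ hf, excess]

theorem excess_sub_const [CharZero K] (s : Finset ι) (f : ι → K) (m : K) :
    excess s (fun i ↦ f i - m) = excess s f := by
  simp only [excess, sum_sub_distrib, sum_const, card_univ, nsmul_eq_mul]
  linear_combination m * nnratCast_dens_mul_natCast_card (𝕜 := K) s

theorem excess_eq_sub_sum_compl [DecidableEq ι] (s : Finset ι) (f : ι → K) :
    excess s f = (1 - s.dens) * ∑ i ∈ s, f i - s.dens * ∑ i ∈ sᶜ, f i := by
  rw [excess, ← sum_add_sum_compl s f]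
  ring

variable [LinearOrder K] [IsStrictOrderedRing K] {s : Finset ι} {f : ι → K} {a : ι} {m : K}

theorem nnratCast_dens_le_one : (s.dens : K) ≤ 1 := by
  exact_mod_cast dens_le_one

theorem one_sub_dens_mul_sub_le_excess (ha : a ∈ s) (hs : ∀ i ∈ s, m ≤ f i)
    (hsc : ∀ i ∉ s, f i ≤ m) : (1 - s.dens) * (f a - m) ≤ excess s f := by
  classical
  have le_sum : f a - m ≤ ∑ i ∈ s, (f i - m) :=
    single_le_sum (f := fun i ↦ f i - m) (fun i hi ↦ sub_nonneg.2 (hs i hi)) ha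
  have sum_compl_nonpos : ∑ i ∈ sᶜ, (f i - m) ≤ 0 :=
    sum_nonpos fun i hi ↦ sub_nonpos.2 (hsc i (mem_compl.1 hi))
  calc (1 - s.dens) * (f a - m)
      ≤ (1 - s.dens) * ∑ i ∈ s, (f i - m) :=
        mul_le_mul_of_nonneg_left le_sum (sub_nonneg.2 nnratCast_dens_le_one)
    _ ≤ (1 - s.dens) * ∑ i ∈ s, (f i - m) - s.dens * ∑ i ∈ sᶜ, (f i - m) :=
        (le_sub_self_iff _).2 (mul_nonpos_of_nonneg_of_nonpos (by positivity) sum_compl_nonpos)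
    _ = excess s f := by rw [← excess_eq_sub_sum_compl, excess_sub_const]

theorem crrt_stmt_14_general {r : K} (ha : a ∈ s) (hs : ∀ i ∈ s, m ≤ f i)
    (hsc : ∀ i ∉ s, f i ≤ m) (hpos : 0 < f a) (hsum : ∑ i, f i ≠ 0) (hgap : m ≤ r * f a) :
    (1 - s.dens) * (1 - r) ≤
      ((∑ i ∈ s, f i) / (∑ i, f i) - s.dens) * ((∑ i, f i) / f a) := by
  rw [sum_div_sum_sub_dens_mul_sum_div hsum, le_div_iff₀ hpos]
  calc (1 - s.dens) * (1 - r) * f a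
      = (1 - s.dens) * (f a - r * f a) := by ring
    _ ≤ (1 - s.dens) * (f a - m) :=
        mul_le_mul_of_nonneg_left (sub_le_sub_left hgap _) (sub_nonneg.2 nnratCast_dens_le_one)
    _ ≤ excess s f := one_sub_dens_mul_sub_le_excess ha hs hsc

end Excess

/-- **Deterministic minimization inequality (Theorem 5 core).**
Let `M_0 ≥ M_1 ≥ … ≥ M_b ≥ 0` with `M_0 > 0` and `M_0 ≥ e^ε · M_λ` for some
`λ ∈ {1, …, b}` and `ε ≥ 0`, and write `S = Σ_i M_i`.  Then
`((M_0 + … + M_{λ−1})/S − λ/(b+1)) · (S/M_0) ≥ (1 − λ/(b+1)) · (1 − e^{−ε})`. -/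
theorem crrt_stmt_14 (b : ℕ) (hb : 1 ≤ b) (lam : ℕ) (hlam1 : 1 ≤ lam) (hlamb : lam ≤ b)
    (ε : ℝ) (hε : 0 ≤ ε) (M : Fin (b + 1) → ℝ)
    (hmono : ∀ i j : Fin (b + 1), i ≤ j → M j ≤ M i)
    (hnonneg : ∀ i, 0 ≤ M i) (hpos : 0 < M 0)
    (hgap : Real.exp ε * M ⟨lam, by omega⟩ ≤ M 0) :
    (1 - (lam : ℝ) / (b + 1)) * (1 - Real.exp (-ε)) ≤
      ((∑ i ∈ Finset.univ.filter fun i : Fin (b + 1) => i.val < lam, M i)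
          / (∑ i, M i) - (lam : ℝ) / (b + 1)) * ((∑ i, M i) / M 0) := by
  have gap_inv : M ⟨lam, by omega⟩ ≤ Real.exp (-ε) * M 0 := by
    rwa [Real.exp_neg, le_inv_mul_iff₀ (Real.exp_pos ε)]
  have sum_pos : 0 < ∑ i, M i :=
    Finset.sum_pos' (fun i _ ↦ hnonneg i) ⟨0, Finset.mem_univ 0, hpos⟩
  have general := crrt_stmt_14_general (f := M) (m := M ⟨lam, by omega⟩)
    (s := Finset.univ.filter fun i : Fin (b + 1) ↦ i.val < lam)
    (Finset.mem_filter.2 ⟨Finset.mem_univ 0, hlam1⟩)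
    (fun i hi ↦ hmono _ _ (Fin.le_def.2 (Finset.mem_filter.1 hi).2.le))
    (fun i hi ↦ hmono _ _ (by simpa [Fin.le_def] using hi)) hpos sum_pos.ne' gap_inv
  rwa [nnratCast_dens_filter_val_lt (by omega), Nat.cast_succ] at general
end

section
/- Let b ≥ 1, let α ∈ [0, 1] with λ = ⌊(b+1)α⌋ ∈ {1, …, b}, let ε ≥ 0 and c ≥ 0. On a probability space let W = (W_0, W_1, …, W_b) be a random vector satisfying W_0 ≥ W_1 ≥ … ≥ W_b ≥ 0 and W_0 > 0 almost surely, and write S = W_0 + … + W_b. Suppose E[ (W_0/S) · 1{ W_0 ≥ e^{ε} · W_λ } ] ≥ c. Then E[ (W_0 + W_1 + … + W_{λ−1}) / S ] ≥ λ/(b+1) + c · (1 − λ/(b+1)) · (1 − e^{−ε}). -/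
open MeasureTheory

/-! Fix a threshold `t` that separates the `λ` largest weights from the others, and let `N` be the
number of weights. Measuring every weight from `t`, the excess `N (W_0 + … + W_{λ-1}) - λ S` is a
sum of nonnegative terms, one of which is `(N - λ) (W_0 - t)`. With `t = W_λ`, on the event
`W_0 ≥ e^ε W_λ` this term is at least `(N - λ) (1 - e^{-ε}) W_0`. Divide by `N S` and integrate. -/

section Deterministic

open Finset

variable {ι : Type*} [Fintype ι]

theorem card_mul_sum_sub_card_mul_sum_univ {R : Type*} [CommRing R] [DecidableEq ι]
    (s : Finset ι) (w : ι → R) (t : R) :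
    (Fintype.card ι : R) * ∑ i ∈ s, w i - #s * ∑ i, w i =
      #sᶜ * ∑ i ∈ s, (w i - t) + #s * ∑ i ∈ sᶜ, (t - w i) := by
  rw [← sum_add_sum_compl s w, ← card_add_card_compl s]
  simp only [sum_sub_distrib, sum_const, nsmul_eq_mul, Nat.cast_add]
  ring

theorem card_sub_card_mul_sub_le {R : Type*} [CommRing R] [PartialOrder R] [IsOrderedRing R]
    {s : Finset ι} {w : ι → R} {t : R} {i₀ : ι} (hi₀ : i₀ ∈ s)
    (hs : ∀ i ∈ s, t ≤ w i) (hsc : ∀ i ∉ s, w i ≤ t) :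
    ((Fintype.card ι : R) - #s) * (w i₀ - t) ≤
      (Fintype.card ι : R) * ∑ i ∈ s, w i - #s * ∑ i, w i := by
  classical
  have hcard : (Fintype.card ι : R) - #s = #sᶜ := by
    rw [← card_add_card_compl s, Nat.cast_add, add_sub_cancel_left]
  have htop : w i₀ - t ≤ ∑ i ∈ s, (w i - t) :=
    single_le_sum (f := fun i ↦ w i - t) (fun i hi ↦ sub_nonneg.2 (hs i hi)) hi₀
  have hbot : 0 ≤ ∑ i ∈ sᶜ, (t - w i) :=
    sum_nonneg fun i hi ↦ sub_nonneg.2 (hsc i (mem_compl.1 hi))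
  rw [card_mul_sum_sub_card_mul_sum_univ s w t, hcard]
  exact (mul_le_mul_of_nonneg_left htop (Nat.cast_nonneg _)).trans
    (le_add_of_nonneg_right (mul_nonneg (Nat.cast_nonneg _) hbot))

variable {K : Type*} [Field K]

/-- The share of the total weight `∑ i, w i` carried by the indices in `s`. It is `0` when the
total weight vanishes. -/
def weightShare (w : ι → K) (s : Finset ι) : K :=
  (∑ i ∈ s, w i) / ∑ i, w i

variable [LinearOrder K] [IsStrictOrderedRing K] {s : Finset ι} {w : ι → K} {t r : K} {i₀ : ι}

theorem weightShare_nonneg (hw : ∀ i, 0 ≤ w i) : 0 ≤ weightShare w s :=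
  div_nonneg (sum_nonneg fun i _ ↦ hw i) (sum_nonneg fun i _ ↦ hw i)

theorem weightShare_le_one (hw : ∀ i, 0 ≤ w i) : weightShare w s ≤ 1 :=
  div_le_one_of_le₀ (sum_le_univ_sum_of_nonneg hw) (sum_nonneg fun i _ ↦ hw i)

theorem card_div_card_add_mul_sub_div_sum_le_weightShare (hw : 0 < ∑ i, w i) (hi₀ : i₀ ∈ s)
    (hs : ∀ i ∈ s, t ≤ w i) (hsc : ∀ i ∉ s, w i ≤ t) :
    (#s : K) / Fintype.card ι + (1 - #s / Fintype.card ι) * ((w i₀ - t) / ∑ i, w i) ≤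
      weightShare w s := by
  have hN : (0 : K) < Fintype.card ι := Nat.cast_pos.2 (Fintype.card_pos_iff.2 ⟨i₀⟩)
  calc (#s : K) / Fintype.card ι + (1 - #s / Fintype.card ι) * ((w i₀ - t) / ∑ i, w i)
      = (#s * ∑ i, w i + (Fintype.card ι - #s) * (w i₀ - t)) / (Fintype.card ι * ∑ i, w i) := by
        field_simp
    _ ≤ (Fintype.card ι * ∑ i ∈ s, w i) / (Fintype.card ι * ∑ i, w i) := by
        gcongr
        linarith [card_sub_card_mul_sub_le hi₀ hs hsc]
    _ = weightShare w s := mul_div_mul_left _ _ hN.ne'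

theorem one_sub_inv_mul_ite_weightShare_singleton_le (hw : 0 ≤ ∑ i, w i) (hr : 0 < r)
    (ht : t ≤ w i₀) :
    (1 - r⁻¹) * (if r * t ≤ w i₀ then weightShare w {i₀} else 0) ≤ (w i₀ - t) / ∑ i, w i := by
  split_ifs with h
  · have ht' : t ≤ r⁻¹ * w i₀ := (le_inv_mul_iff₀ hr).2 h
    rw [weightShare, sum_singleton, ← mul_div_assoc]
    gcongr
    linarith
  · rw [mul_zero]
    exact div_nonneg (sub_nonneg.2 ht) hw

theorem card_div_card_add_mul_ite_le_weightShare (hw : 0 < ∑ i, w i) (hr : 0 < r) (hi₀ : i₀ ∈ s)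
    (hs : ∀ i ∈ s, t ≤ w i) (hsc : ∀ i ∉ s, w i ≤ t) :
    (#s : K) / Fintype.card ι + (1 - #s / Fintype.card ι) * (1 - r⁻¹) *
      (if r * t ≤ w i₀ then weightShare w {i₀} else 0) ≤ weightShare w s := by
  have hfrac : 0 ≤ 1 - (#s : K) / Fintype.card ι :=
    sub_nonneg.2 (div_le_one_of_le₀ (Nat.cast_le.2 (card_le_univ s)) (Nat.cast_nonneg _))
  refine le_trans ?_ (card_div_card_add_mul_sub_div_sum_le_weightShare hw hi₀ hs hsc)
  rw [mul_assoc]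
  gcongr
  exact one_sub_inv_mul_ite_weightShare_singleton_le hw.le hr (hs i₀ hi₀)

end Deterministic

section Random

open scoped Finset

variable {Ω ι : Type*} [MeasurableSpace Ω] {P : Measure Ω} [Fintype ι] {W : Ω → ι → ℝ}

theorem aemeasurable_weightShare (hW : AEMeasurable W P) (s : Finset ι) :
    AEMeasurable (fun ω ↦ weightShare (W ω) s) P := by
  have hWi : ∀ i, AEMeasurable (fun ω ↦ W ω i) P := aemeasurable_pi_iff.1 hW
  exact (Finset.aemeasurable_fun_sum _ fun i _ ↦ hWi i).div
    (Finset.aemeasurable_fun_sum _ fun i _ ↦ hWi i)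

theorem integrable_weightShare [IsFiniteMeasure P] (hW : AEMeasurable W P)
    (hW0 : ∀ᵐ ω ∂P, ∀ i, 0 ≤ W ω i) (s : Finset ι) :
    Integrable (fun ω ↦ weightShare (W ω) s) P :=
  .of_mem_Icc 0 1 (aemeasurable_weightShare hW s) <|
    hW0.mono fun _ h ↦ ⟨weightShare_nonneg h, weightShare_le_one h⟩

theorem card_div_card_add_mul_integral_ite_le_integral_weightShare [IsProbabilityMeasure P]
    {T : Ω → ℝ} {r : ℝ} {s : Finset ι} {i₀ : ι} (hW : AEMeasurable W P) (hT : AEMeasurable T P)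
    (hW0 : ∀ᵐ ω ∂P, ∀ i, 0 ≤ W ω i) (hpos : ∀ᵐ ω ∂P, 0 < ∑ i, W ω i) (hr : 0 < r) (hi₀ : i₀ ∈ s)
    (hs : ∀ᵐ ω ∂P, ∀ i ∈ s, T ω ≤ W ω i) (hsc : ∀ᵐ ω ∂P, ∀ i ∉ s, W ω i ≤ T ω) :
    (#s : ℝ) / Fintype.card ι + (1 - #s / Fintype.card ι) * (1 - r⁻¹) *
        ∫ ω, (if r * T ω ≤ W ω i₀ then weightShare (W ω) {i₀} else 0) ∂P ≤
      ∫ ω, weightShare (W ω) s ∂P := by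
  have hevent : NullMeasurableSet {ω | r * T ω ≤ W ω i₀} P :=
    nullMeasurableSet_le (hT.const_mul r) (aemeasurable_pi_iff.1 hW i₀)
  have hintegrable : Integrable
      (fun ω ↦ if r * T ω ≤ W ω i₀ then weightShare (W ω) {i₀} else 0) P :=
    (integrable_weightShare hW hW0 {i₀}).indicator₀ hevent
  calc _ = ∫ ω, ((#s : ℝ) / Fintype.card ι + (1 - #s / Fintype.card ι) * (1 - r⁻¹) *
          (if r * T ω ≤ W ω i₀ then weightShare (W ω) {i₀} else 0)) ∂P := by
        rw [integral_add (integrable_const _) (hintegrable.const_mul _), integral_const_mul,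
          integral_const, probReal_univ, one_smul]
    _ ≤ ∫ ω, weightShare (W ω) s ∂P := by
        refine integral_mono_ae ((integrable_const _).add (hintegrable.const_mul _))
          (integrable_weightShare hW hW0 s) ?_
        filter_upwards [hpos, hs, hsc] with ω hpos hs hsc
        exact card_div_card_add_mul_ite_le_weightShare hpos hr hi₀ hs hsc

theorem card_Iio_div_card_add_mul_integral_ite_le_integral_weightShare [IsProbabilityMeasure P]
    [LinearOrder ι] [LocallyFiniteOrderBot ι] {r : ℝ} {i₀ l : ι} (hW : AEMeasurable W P)
    (hW0 : ∀ᵐ ω ∂P, ∀ i, 0 ≤ W ω i) (hpos : ∀ᵐ ω ∂P, 0 < ∑ i, W ω i)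
    (hanti : ∀ᵐ ω ∂P, Antitone (W ω)) (hr : 0 < r) (hl : i₀ < l) :
    (#(Finset.Iio l) : ℝ) / Fintype.card ι +
        (1 - #(Finset.Iio l) / Fintype.card ι) * (1 - r⁻¹) *
          ∫ ω, (if r * W ω l ≤ W ω i₀ then weightShare (W ω) {i₀} else 0) ∂P ≤
      ∫ ω, weightShare (W ω) (Finset.Iio l) ∂P :=
  card_div_card_add_mul_integral_ite_le_integral_weightShare hW (aemeasurable_pi_iff.1 hW l)
    hW0 hpos hr (Finset.mem_Iio.2 hl)
    (hanti.mono fun _ h _ hi ↦ h (Finset.mem_Iio.1 hi).le)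
    (hanti.mono fun _ h _ hi ↦ h (not_lt.1 (mt Finset.mem_Iio.2 hi)))

end Random

/-- **Theorem 5, statement 2 (type-1 error lower bound under misspecification),
abstract form.**  Let `W = (W_0, …, W_b)` be a random weight vector that is almost
surely nonincreasing, nonnegative, with `W_0 > 0`, and write `S = Σ_r W_r`.
Let `λ = ⌊(b+1)α⌋ ∈ {1, …, b}`.  If `E[(W_0/S) · 1{W_0 ≥ e^ε W_λ}] ≥ c`, then
`E[(W_0 + … + W_{λ−1})/S] ≥ λ/(b+1) + c·(1 − λ/(b+1))·(1 − e^{−ε})`. -/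
theorem crrt_stmt_15 {Ω : Type*} [MeasurableSpace Ω]
    (P : Measure Ω) [IsProbabilityMeasure P]
    (b : ℕ) (hb : 1 ≤ b) (α : ℝ) (hα : α ∈ Set.Icc (0 : ℝ) 1)
    (lam : ℕ) (hlam : lam = ⌊(b + 1 : ℝ) * α⌋₊) (hlam1 : 1 ≤ lam) (hlamb : lam ≤ b)
    (ε c : ℝ) (hε : 0 ≤ ε) (hc : 0 ≤ c)
    (W : Ω → Fin (b + 1) → ℝ) (hW : Measurable W)
    (hWas : ∀ᵐ ω ∂P, (∀ i j : Fin (b + 1), i ≤ j → W ω j ≤ W ω i) ∧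
      (∀ i, 0 ≤ W ω i) ∧ 0 < W ω 0)
    (hcond : c ≤ ∫ ω, (if Real.exp ε * W ω ⟨lam, by omega⟩ ≤ W ω 0
        then W ω 0 / ∑ r, W ω r else 0) ∂P) :
    (lam : ℝ) / (b + 1) + c * (1 - (lam : ℝ) / (b + 1)) * (1 - Real.exp (-ε))
      ≤ ∫ ω, (∑ i ∈ Finset.univ.filter fun i : Fin (b + 1) => i.val < lam, W ω i)
          / ∑ r, W ω r ∂P := by
  let l : Fin (b + 1) := ⟨lam, by omega⟩
  have hIio : (Finset.univ.filter fun i : Fin (b + 1) => i.val < lam) = Finset.Iio l := by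
    ext i
    simp only [Finset.mem_filter_univ, Finset.mem_Iio, Fin.lt_def, l]
  have hnonneg : ∀ᵐ ω ∂P, ∀ i, 0 ≤ W ω i := hWas.mono fun _ h ↦ h.2.1
  have hpos : ∀ᵐ ω ∂P, 0 < ∑ i, W ω i :=
    hWas.mono fun _ h ↦ Finset.sum_pos' (fun i _ ↦ h.2.1 i) ⟨0, Finset.mem_univ 0, h.2.2⟩
  have hanti : ∀ᵐ ω ∂P, Antitone (W ω) := hWas.mono fun _ h ↦ h.1
  have hbound := card_Iio_div_card_add_mul_integral_ite_le_integral_weightShare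
    hW.aemeasurable hnonneg hpos hanti (Real.exp_pos ε) (show 0 < l from hlam1)
  simp only [weightShare, Finset.sum_singleton, Fin.card_Iio, Fintype.card_fin, Nat.cast_add_one,
    ← Real.exp_neg] at hbound
  have hfrac : 0 ≤ 1 - (lam : ℝ) / (b + 1) :=
    sub_nonneg.2 (div_le_one_of_le₀ (by exact_mod_cast hlamb.trans b.le_succ) (by positivity))
  have hexp : 0 ≤ 1 - Real.exp (-ε) := sub_nonneg.2 (Real.exp_le_one_iff.2 (neg_nonpos.2 hε))
  rw [hIio, mul_assoc, mul_comm c]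
  exact (add_le_add_right (mul_le_mul_of_nonneg_left hcond (mul_nonneg hfrac hexp)) _).trans hbound
end

section
/- Let E be a measurable space, b ≥ 1, and let T : E^{b+1} → ℝ^{b+1} be X-symmetric, i.e., T(x ∘ σ) = T(x) ∘ σ for every permutation σ of {0, 1, …, b}. Let u ∈ E^{b+1} be such that the values T(u)_0, T(u)_1, …, T(u)_b are pairwise distinct. Then: (i) for any two permutations σ, σ' of {0, 1, …, b} with σ(0) = σ'(0), the rank of T(u ∘ σ)_0 within the multiset {T(u ∘ σ)_k : k = 0, …, b} equals the rank of T(u ∘ σ')_0 within {T(u ∘ σ')_k : k = 0, …, b}; and (ii) for permutations σ, σ' with σ(0) ≠ σ'(0), these two ranks are different. Consequently there is a bijection Ψ from ranks {1, …, b+1} to the entries {u_0, …, u_b} such that T(u ∘ σ)_0 has rank r if and only if u_{σ(0)} = Ψ(r). -/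
/-!
Symmetry turns the rank of `T (u ∘ σ)` at a position `i₀` into the rank of the fixed vector `T u` at
`σ i₀`, so only `σ i₀` matters. When `T u` is injective, its ranks enumerate the positions
bijectively; moreover `u` itself is then injective, because swapping two equal entries of `u`
changes neither `u` nor `T u`. Hence positions may be replaced by the entries of `u` they carry.
-/

open Function

section DescRank

variable {ι κ α : Type*} [Fintype ι] [Fintype κ]

/-- The rank of `v i` among the values of `v` listed in decreasing order, starting from `1` for the
largest value. Tied values all receive the last of the positions they occupy. -/
def descRank [LE α] [DecidableLE α] (v : ι → α) (i : ι) : ℕ :=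
  (Finset.univ.filter fun k => v i ≤ v k).card

theorem descRank_comp_equiv [LE α] [DecidableLE α] (v : κ → α) (e : ι ≃ κ) (i : ι) :
    descRank (v ∘ e) i = descRank v (e i) :=
  Finset.card_equiv e fun k => by simp only [Finset.mem_filter_univ, comp_apply]

theorem descRank_pos [Preorder α] [DecidableLE α] (v : ι → α) (i : ι) : 0 < descRank v i :=
  Finset.card_pos.mpr ⟨i, Finset.mem_filter_univ i |>.mpr le_rfl⟩

theorem descRank_le_card [LE α] [DecidableLE α] (v : ι → α) (i : ι) :
    descRank v i ≤ Fintype.card ι :=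
  Finset.card_le_univ _

theorem descRank_lt_descRank [Preorder α] [DecidableLE α] {v : ι → α} {i j : ι} (h : v i < v j) :
    descRank v j < descRank v i := by
  refine Finset.card_lt_card (Finset.ssubset_iff_of_subset ?_ |>.mpr ⟨i, ?_, ?_⟩)
  · exact Finset.monotone_filter_right _ fun _ _ hk => h.le.trans hk
  · exact Finset.mem_filter_univ i |>.mpr le_rfl
  · exact fun hi => h.not_ge (Finset.mem_filter_univ i |>.mp hi)

theorem descRank_injective [LinearOrder α] {v : ι → α} (hv : Injective v) :
    Injective (descRank v) := by
  intro i j hij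
  by_contra hne
  rcases (hv.ne hne).lt_or_gt with h | h
  · exact (descRank_lt_descRank h).ne' hij
  · exact (descRank_lt_descRank h).ne hij

theorem exists_equiv_descRank_eq_iff [LinearOrder α] {n : ℕ} (hn : Fintype.card ι = n)
    {v : ι → α} (hv : Injective v) :
    ∃ e : Fin n ≃ ι, ∀ i r, descRank v i = r.val + 1 ↔ i = e r := by
  have rankIndex_lt (i : ι) : descRank v i - 1 < n := by
    have := descRank_pos v i
    have := descRank_le_card v i
    lia
  let rankIndex (i : ι) : Fin n := ⟨descRank v i - 1, rankIndex_lt i⟩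
  have descRank_eq_iff (i : ι) (r : Fin n) : descRank v i = r.val + 1 ↔ rankIndex i = r := by
    rw [Fin.ext_iff, Nat.sub_eq_iff_eq_add (descRank_pos v i)]
  have rankIndex_injective : Injective rankIndex := fun i j h =>
    descRank_injective hv <|
      ((descRank_eq_iff i _).mpr h).trans ((descRank_eq_iff j _).mpr rfl).symm
  have rankIndex_bijective : Bijective rankIndex :=
    (Fintype.bijective_iff_injective_and_card _).mpr
      ⟨rankIndex_injective, hn.trans (Fintype.card_fin n).symm⟩
  let e := Equiv.ofBijective rankIndex rankIndex_bijective
  exact ⟨e.symm, fun i r => (descRank_eq_iff i r).trans e.eq_symm_apply.symm⟩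

end DescRank

section PermEquivariant

variable {ι E α : Type*}

/-- `X`-symmetry of a vector of statistics: permuting the entries of the configuration permutes
the statistics in the same way. -/
def IsPermEquivariant (T : (ι → E) → ι → α) : Prop :=
  ∀ (x : ι → E) (σ : Equiv.Perm ι), T (x ∘ σ) = T x ∘ σ

namespace IsPermEquivariant

variable {T : (ι → E) → ι → α}

theorem injective_of_injective_apply (hT : IsPermEquivariant T) {u : ι → E}
    (hu : Injective (T u)) : Injective u := by
  classical
  intro i j hij
  have swap_invariant : u ∘ Equiv.swap i j = u := funext (Equiv.apply_swap_eq_self hij)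
  apply hu
  calc
    T u i = T (u ∘ Equiv.swap i j) i := by rw [swap_invariant]
    _ = T u (Equiv.swap i j i) := congrFun (hT u _) i
    _ = T u j := by rw [Equiv.swap_apply_left]

theorem descRank_apply_comp [Fintype ι] [LE α] [DecidableLE α] (hT : IsPermEquivariant T)
    (u : ι → E) (σ : Equiv.Perm ι) (i : ι) : descRank (T (u ∘ σ)) i = descRank (T u) (σ i) := by
  rw [hT, descRank_comp_equiv]

end IsPermEquivariant

theorem crrt_stmt_16_general [Fintype ι] [LinearOrder α] {n : ℕ} (hn : Fintype.card ι = n)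
    {T : (ι → E) → ι → α} (hT : IsPermEquivariant T) {u : ι → E} (hu : Injective (T u)) (i₀ : ι) :
    (∀ σ σ' : Equiv.Perm ι, σ i₀ = σ' i₀ →
      descRank (T (u ∘ σ)) i₀ = descRank (T (u ∘ σ')) i₀) ∧
    (∀ σ σ' : Equiv.Perm ι, σ i₀ ≠ σ' i₀ →
      descRank (T (u ∘ σ)) i₀ ≠ descRank (T (u ∘ σ')) i₀) ∧
    (∃ Ψ : Fin n → E, Injective Ψ ∧ Set.range Ψ = Set.range u ∧
      ∀ (σ : Equiv.Perm ι) (r : Fin n),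
        descRank (T (u ∘ σ)) i₀ = r.val + 1 ↔ u (σ i₀) = Ψ r) := by
  simp only [hT.descRank_apply_comp]
  have u_injective := hT.injective_of_injective_apply hu
  obtain ⟨e, he⟩ := exists_equiv_descRank_eq_iff hn hu
  refine ⟨fun σ σ' h => by rw [h], fun σ σ' h => (descRank_injective hu).ne h, u ∘ e,
    u_injective.comp e.injective, e.surjective.range_comp u, fun σ r => ?_⟩
  rw [he, comp_apply, u_injective.eq_iff]

end PermEquivariant

/-- **Claim 1 in the proof of Theorem 3.**
Let `T : E^{b+1} → ℝ^{b+1}` be `X`-symmetric and let `u ∈ E^{b+1}` be such that the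
values `T(u)_0, …, T(u)_b` are pairwise distinct.  Writing, for a configuration `x`,
`rank(x) = #{k : T(x)_0 ≤ T(x)_k}` (the 1-based rank of `T(x)_0` from the top), then:
(i) permutations with the same first value give the same rank;
(ii) permutations with different first values give different ranks;
(iii) there is a bijection `Ψ` from ranks `{1, …, b+1}` onto the entries of `u` such
that `T(u ∘ σ)_0` has rank `r` iff `u (σ 0) = Ψ r` (with rank `r` encoded as `r.val + 1`
for `r : Fin (b+1)`). -/
theorem crrt_stmt_16 {E : Type*} [MeasurableSpace E] (b : ℕ) (hb : 1 ≤ b)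
    (T : (Fin (b + 1) → E) → Fin (b + 1) → ℝ)
    (hsym : ∀ (x : Fin (b + 1) → E) (σ : Equiv.Perm (Fin (b + 1))),
      T (fun i => x (σ i)) = fun i => T x (σ i))
    (u : Fin (b + 1) → E)
    (hdist : Function.Injective (T u)) :
    (∀ σ σ' : Equiv.Perm (Fin (b + 1)), σ 0 = σ' 0 →
      (Finset.univ.filter fun k : Fin (b + 1) =>
          T (fun i => u (σ i)) 0 ≤ T (fun i => u (σ i)) k).card =
        (Finset.univ.filter fun k : Fin (b + 1) =>
          T (fun i => u (σ' i)) 0 ≤ T (fun i => u (σ' i)) k).card) ∧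
    (∀ σ σ' : Equiv.Perm (Fin (b + 1)), σ 0 ≠ σ' 0 →
      (Finset.univ.filter fun k : Fin (b + 1) =>
          T (fun i => u (σ i)) 0 ≤ T (fun i => u (σ i)) k).card ≠
        (Finset.univ.filter fun k : Fin (b + 1) =>
          T (fun i => u (σ' i)) 0 ≤ T (fun i => u (σ' i)) k).card) ∧
    (∃ Ψ : Fin (b + 1) → E, Function.Injective Ψ ∧ Set.range Ψ = Set.range u ∧
      ∀ (σ : Equiv.Perm (Fin (b + 1))) (r : Fin (b + 1)),
        ((Finset.univ.filter fun k : Fin (b + 1) =>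
            T (fun i => u (σ i)) 0 ≤ T (fun i => u (σ i)) k).card = r.val + 1
          ↔ u (σ 0) = Ψ r)) :=
  crrt_stmt_16_general (Fintype.card_fin _) hsym hdist 0
end

section
/- Let (E, 𝓔, m) be a σ-finite measure space, let n ≥ 1, and let f* and f be nonnegative measurable functions on Eⁿ with ∫ f* dmⁿ = ∫ f dmⁿ = 1, where mⁿ is the n-fold product measure. For x ∈ Eⁿ and a permutation σ of {1, …, n}, write x_σ for the vector with coordinates (x_σ)_i = x_{σ(i)}. Define, for g ∈ {f*, f}, the orbit weights r_g(σ, x) = g(x_σ) / Σ_{τ ∈ S_n} g(x_τ) when Σ_{τ} g(x_τ) > 0, and r_g(σ, x) = 0 otherwise. Then ∫_{Eⁿ} [ (1/2) Σ_{σ ∈ S_n} | r_{f*}(σ, x) − r_f(σ, x) | ] f*(x) dmⁿ(x) ≤ ∫_{Eⁿ} | f*(x) − f(x) | dmⁿ(x). -/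
open MeasureTheory

/-!
Let a finite group `G` act on `X` preserving `μ`. On one orbit, with orbit sums
`A = ∑ p (σ • x)` and `B = ∑ q (σ • x)`, the identity
`A (p / A - q / B) = (p - q) - (q / B) (A - B)` shows that `A` times the total variation distance
between the orbit weights is at most `∑ |p (σ • x) - q (σ • x)|`. That distance `T` is a
`G`-invariant function of `x`, so averaging over the group gives
`|G| ∫ T p = ∫ T A ≤ ∫ ∑ |p (σ • x) - q (σ • x)| = |G| ∫ |p - q|`.
-/

section Normalization

variable {ι K : Type*} [Field K] [LinearOrder K] [IsStrictOrderedRing K]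

theorem sum_abs_div_sum_sub_div_sum_mul_abs_sum_le (s : Finset ι) (a : ι → K) {b : ι → K}
    (hb : ∀ i ∈ s, 0 ≤ b i) :
    (∑ i ∈ s, |a i / ∑ j ∈ s, a j - b i / ∑ j ∈ s, b j|) * |∑ j ∈ s, a j| ≤
      2 * ∑ i ∈ s, |a i - b i| := by
  set A := ∑ j ∈ s, a j with hA
  set B := ∑ j ∈ s, b j with hB
  have hB0 : 0 ≤ B := Finset.sum_nonneg hb
  have abs_sub_le : |A - B| ≤ ∑ i ∈ s, |a i - b i| := by
    rw [hA, hB, ← Finset.sum_sub_distrib]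
    exact Finset.abs_sum_le_sum_abs _ _
  rcases eq_or_ne A 0 with hA0 | hA0
  · rw [hA0, abs_zero, mul_zero]
    positivity
  have div_mul_sum : ∀ i ∈ s, b i / B * B = b i := fun i hi =>
    div_mul_cancel_of_imp fun h => (Finset.sum_eq_zero_iff_of_nonneg hb).1 h i hi
  have term_le : ∀ i ∈ s, |a i / A - b i / B| * |A| ≤ |a i - b i| + b i / B * |A - B| := by
    intro i hi
    calc |a i / A - b i / B| * |A| = |(a i - b i) - b i / B * (A - B)| := by
          rw [← abs_mul, sub_mul, div_mul_cancel₀ _ hA0, mul_sub, div_mul_sum i hi]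
          congr 1
          ring
      _ ≤ |a i - b i| + |b i / B * (A - B)| := abs_sub _ _
      _ = |a i - b i| + b i / B * |A - B| := by
          rw [abs_mul, abs_of_nonneg (div_nonneg (hb i hi) hB0)]
  calc (∑ i ∈ s, |a i / A - b i / B|) * |A|
      ≤ ∑ i ∈ s, (|a i - b i| + b i / B * |A - B|) := by
        rw [Finset.sum_mul]
        exact Finset.sum_le_sum term_le
    _ = ∑ i ∈ s, |a i - b i| + B / B * |A - B| := by
        rw [Finset.sum_add_distrib, ← Finset.sum_mul, ← Finset.sum_div]
    _ ≤ 2 * ∑ i ∈ s, |a i - b i| := by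
        linarith [mul_le_of_le_one_left (abs_nonneg (A - B)) (div_self_le_one B)]

end Normalization

section OrbitSum

variable {G X F : Type*} [Group G] [Fintype G] [MulAction G X]

theorem sum_smul_smul [AddCommMonoid F] (k : X → F) (τ : G) (x : X) :
    ∑ σ : G, k (σ • τ • x) = ∑ σ : G, k (σ • x) :=
  Fintype.sum_equiv (Equiv.mulRight τ) _ _ fun σ => by rw [Equiv.coe_mulRight, mul_smul]

variable [MeasurableSpace X] [MeasurableConstSMul G X] {μ : Measure X} [SMulInvariantMeasure G X μ]
  [NormedAddCommGroup F] {k : X → F}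

theorem integrable_sum_smul (hk : Integrable k μ) : Integrable (fun x => ∑ σ : G, k (σ • x)) μ :=
  integrable_finsetSum _ fun σ _ => (measurePreserving_smul σ μ).integrable_comp_of_integrable hk

theorem integral_sum_smul [NormedSpace ℝ F] (hk : Integrable k μ) :
    ∫ x, ∑ σ : G, k (σ • x) ∂μ = Fintype.card G • ∫ x, k x ∂μ := by
  have hσ (σ : G) : Integrable (fun x => k (σ • x)) μ :=
    (measurePreserving_smul σ μ).integrable_comp_of_integrable hk
  rw [integral_finsetSum _ fun σ _ => hσ σ]
  simp only [integral_smul_eq_self k, Finset.sum_const, Finset.card_univ]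

end OrbitSum

section OrbitTVDist

variable {G X : Type*} [Group G] [Fintype G] [MulAction G X] {p q : X → ℝ}

/-- The conditional law on the orbit of `x` determined by the density `p`, encoded as weights on `G`
(so a point with nontrivial stabilizer is counted once per group element reaching it). On an orbit
where `p` vanishes identically, division by zero makes all weights `0`. -/
noncomputable def orbitWeight (p : X → ℝ) (x : X) (σ : G) : ℝ :=
  p (σ • x) / ∑ τ : G, p (τ • x)

variable (G) in
/-- The total variation distance between the conditional laws on the orbit of `x` determined by the
densities `p` and `q`, both encoded by their weights on `G`. -/
noncomputable def orbitTVDist (p q : X → ℝ) (x : X) : ℝ :=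
  (1 / 2) * ∑ σ : G, |orbitWeight p x σ - orbitWeight q x σ|

theorem orbitWeight_smul (p : X → ℝ) (x : X) (σ τ : G) :
    orbitWeight p (τ • x) σ = orbitWeight p x (σ * τ) := by
  rw [orbitWeight, orbitWeight, sum_smul_smul, mul_smul]

theorem orbitTVDist_smul (p q : X → ℝ) (τ : G) (x : X) :
    orbitTVDist G p q (τ • x) = orbitTVDist G p q x := by
  simp only [orbitTVDist, orbitWeight_smul]
  congr 1
  exact Equiv.sum_comp (Equiv.mulRight τ) fun σ => |orbitWeight p x σ - orbitWeight q x σ|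

theorem orbitTVDist_nonneg (p q : X → ℝ) (x : X) : 0 ≤ orbitTVDist G p q x := by
  unfold orbitTVDist
  positivity

theorem orbitTVDist_mul_sum_le (p : X → ℝ) (hq : ∀ x, 0 ≤ q x) (x : X) :
    orbitTVDist G p q x * ∑ σ : G, p (σ • x) ≤ ∑ σ : G, |p (σ • x) - q (σ • x)| := by
  have normalized : (∑ σ : G, |orbitWeight p x σ - orbitWeight q x σ|) * |∑ σ : G, p (σ • x)| ≤
      2 * ∑ σ : G, |p (σ • x) - q (σ • x)| :=
    sum_abs_div_sum_sub_div_sum_mul_abs_sum_le _ (fun σ : G => p (σ • x)) fun σ _ => hq (σ • x)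
  calc orbitTVDist G p q x * ∑ σ : G, p (σ • x)
      ≤ orbitTVDist G p q x * |∑ σ : G, p (σ • x)| :=
        mul_le_mul_of_nonneg_left (le_abs_self _) (orbitTVDist_nonneg p q x)
    _ ≤ ∑ σ : G, |p (σ • x) - q (σ • x)| := by
        rw [orbitTVDist]
        linarith

variable [MeasurableSpace X] [MeasurableConstSMul G X] {μ : Measure X} [SMulInvariantMeasure G X μ]

theorem aestronglyMeasurable_orbitWeight (hp : AEStronglyMeasurable p μ) (σ : G) :
    AEStronglyMeasurable (fun x => orbitWeight p x σ) μ := by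
  have comp_smul (τ : G) : AEStronglyMeasurable (fun x => p (τ • x)) μ :=
    hp.comp_measurePreserving (measurePreserving_smul τ μ)
  exact (comp_smul σ).div₀ (Finset.aestronglyMeasurable_fun_sum _ fun τ _ => comp_smul τ)

theorem aestronglyMeasurable_orbitTVDist (hp : AEStronglyMeasurable p μ)
    (hq : AEStronglyMeasurable q μ) : AEStronglyMeasurable (orbitTVDist G p q) μ :=
  (Finset.aestronglyMeasurable_fun_sum _ fun σ _ =>
    ((aestronglyMeasurable_orbitWeight hp σ).sub
      (aestronglyMeasurable_orbitWeight hq σ)).norm).const_mul _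

theorem integrable_orbitTVDist_mul (hp : ∀ x, 0 ≤ p x) (hq : ∀ x, 0 ≤ q x)
    (hpi : Integrable p μ) (hqi : Integrable q μ) :
    Integrable (fun x => orbitTVDist G p q x * p x) μ := by
  refine (integrable_sum_smul (G := G) (hpi.sub hqi).abs).mono'
    ((aestronglyMeasurable_orbitTVDist hpi.1 hqi.1).mul hpi.1) (ae_of_all _ fun x => ?_)
  have le_orbit_sum : p x ≤ ∑ σ : G, p (σ • x) := by
    simpa only [one_smul] using
      Finset.single_le_sum (fun σ _ => hp (σ • x)) (Finset.mem_univ (1 : G))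
  rw [Real.norm_of_nonneg (mul_nonneg (orbitTVDist_nonneg p q x) (hp x))]
  exact (mul_le_mul_of_nonneg_left le_orbit_sum (orbitTVDist_nonneg p q x)).trans
    (orbitTVDist_mul_sum_le p hq x)

variable (G) in
theorem crrt_stmt_17_general (hp : ∀ x, 0 ≤ p x) (hq : ∀ x, 0 ≤ q x)
    (hpi : Integrable p μ) (hqi : Integrable q μ) :
    ∫ x, orbitTVDist G p q x * p x ∂μ ≤ ∫ x, |p x - q x| ∂μ := by
  have hT : Integrable (fun x => orbitTVDist G p q x * p x) μ :=
    integrable_orbitTVDist_mul hp hq hpi hqi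
  have hD : Integrable (fun x => |p x - q x|) μ := (hpi.sub hqi).abs
  have orbit_sums_le : Fintype.card G • ∫ x, orbitTVDist G p q x * p x ∂μ ≤
      Fintype.card G • ∫ x, |p x - q x| ∂μ := by
    rw [← integral_sum_smul hT, ← integral_sum_smul hD]
    refine integral_mono (integrable_sum_smul hT) (integrable_sum_smul hD) fun x => ?_
    simpa only [orbitTVDist_smul, ← Finset.mul_sum] using orbitTVDist_mul_sum_le p hq x
  exact le_of_nsmul_le_nsmul_right Fintype.card_ne_zero orbit_sums_le

end OrbitTVDist

section DomMulAct

variable {M ι E : Type*}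

instance instFintypeDomMulAct [Fintype M] : Fintype Mᵈᵐᵃ :=
  .ofEquiv M DomMulAct.mk

theorem orbitWeight_domMulAct_mk [Fintype ι] [DecidableEq ι] {p : (ι → E) → ℝ}
    (hp : ∀ x, 0 ≤ p x) (x : ι → E) (σ : Equiv.Perm ι) :
    orbitWeight p x (DomMulAct.mk σ) =
      if 0 < ∑ τ : Equiv.Perm ι, p (fun i => x (τ i))
        then p (fun i => x (σ i)) / ∑ τ : Equiv.Perm ι, p (fun i => x (τ i)) else 0 := by
  have weight_eq : orbitWeight p x (DomMulAct.mk σ) =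
      p (fun i => x (σ i)) / ∑ τ : Equiv.Perm ι, p (fun i => x (τ i)) :=
    congrArg _ (DomMulAct.mk.sum_comp fun c : (Equiv.Perm ι)ᵈᵐᵃ => p (c • x)).symm
  rw [weight_eq]
  split_ifs with hpos
  · rfl
  · rw [le_antisymm (not_lt.1 hpos) (Finset.sum_nonneg fun τ _ => hp _), div_zero]

theorem orbitTVDist_domMulAct_perm [Fintype ι] [DecidableEq ι] (p q : (ι → E) → ℝ) (x : ι → E) :
    orbitTVDist (Equiv.Perm ι)ᵈᵐᵃ p q x = (1 / 2) * ∑ σ : Equiv.Perm ι,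
      |orbitWeight p x (DomMulAct.mk σ) - orbitWeight q x (DomMulAct.mk σ)| := by
  rw [orbitTVDist, ← DomMulAct.mk.sum_comp]

variable [MeasurableSpace E]

instance instMeasurableConstSMulDomMulAct [SMul M ι] : MeasurableConstSMul Mᵈᵐᵃ (ι → E) where
  measurable_const_smul c :=
    measurable_pi_lambda _ fun i => measurable_pi_apply (DomMulAct.mk.symm c • i)

instance instSMulInvariantMeasurePiDomMulAct [Group M] [MulAction M ι] [Fintype ι] (m : Measure E)
    [SigmaFinite m] : SMulInvariantMeasure Mᵈᵐᵃ (ι → E) (Measure.pi fun _ => m) where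
  measure_preimage_smul c s hs := by
    let e : ι ≃ ι := MulAction.toPerm (DomMulAct.mk.symm c)
    have coe_eq : ⇑(MeasurableEquiv.piCongrLeft (fun _ => E) e.symm) =
        (c • · : (ι → E) → ι → E) := by
      ext x i
      simpa [e, DomMulAct.smul_apply] using
        MeasurableEquiv.piCongrLeft_apply_apply e.symm (β := fun _ => E) x (e i)
    rw [← coe_eq]
    exact (measurePreserving_piCongrLeft (fun _ => m) e.symm).measure_preimage
      hs.nullMeasurableSet

end DomMulAct

/-- **Proposition 5 of the paper, density form.**
Let `(E, m)` be σ-finite, `n ≥ 1`, and let `f⋆, f` be nonnegative measurable densities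
on `Eⁿ` integrating to 1 against the product measure `mⁿ`.  For a permutation `σ` and
`g ∈ {f⋆, f}`, the orbit weight is `r_g(σ, x) = g(x_σ) / Σ_τ g(x_τ)` (and `0` when the
denominator vanishes).  Then the average, under the density `f⋆`, of the total-variation
distance `(1/2) Σ_σ |r_{f⋆}(σ, x) − r_f(σ, x)|` between the two orbit distributions is
at most the `L¹` distance `∫ |f⋆ − f| dmⁿ`. -/
theorem crrt_stmt_17 {E : Type*} [MeasurableSpace E] (m : Measure E) [SigmaFinite m]
    (n : ℕ) (hn : 1 ≤ n) (fs f : (Fin n → E) → ℝ)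
    (hfs0 : ∀ x, 0 ≤ fs x) (hf0 : ∀ x, 0 ≤ f x)
    (hfsm : Measurable fs) (hfm : Measurable f)
    (hfs1 : ∫ x, fs x ∂(Measure.pi fun _ : Fin n => m) = 1)
    (hf1 : ∫ x, f x ∂(Measure.pi fun _ : Fin n => m) = 1) :
    ∫ x, (1 / 2) * (∑ σ : Equiv.Perm (Fin n),
        |(if 0 < ∑ τ : Equiv.Perm (Fin n), fs (fun i => x (τ i))
            then fs (fun i => x (σ i)) / ∑ τ : Equiv.Perm (Fin n), fs (fun i => x (τ i))
            else 0) -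
          (if 0 < ∑ τ : Equiv.Perm (Fin n), f (fun i => x (τ i))
            then f (fun i => x (σ i)) / ∑ τ : Equiv.Perm (Fin n), f (fun i => x (τ i))
            else 0)|) * fs x ∂(Measure.pi fun _ : Fin n => m)
      ≤ ∫ x, |fs x - f x| ∂(Measure.pi fun _ : Fin n => m) := by
  simpa only [orbitTVDist_domMulAct_perm, orbitWeight_domMulAct_mk hfs0,
    orbitWeight_domMulAct_mk hf0] using crrt_stmt_17_general (Equiv.Perm (Fin n))ᵈᵐᵃ hfs0 hf0
      (.of_integral_ne_zero (hfs1 ▸ one_ne_zero)) (.of_integral_ne_zero (hf1 ▸ one_ne_zero))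
end
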